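/- arXiv:1812.09322 — 2 statements merged into one kernel-verified Lean document; each statement's English description precedes it below -/
import Mathlib

section
/- Let d ≥ 1 and L ≥ 1 be integers, let f ∈ C_b^L(ℝ^d), and let F : ℝ^d → ℝ be measurable with ∫ |F(z)|(1+‖z‖^L) dz < ∞. For x ∈ ℝ^d and h > 0 define R(x,h) := h^{−L} ( ∫ F(z) f(x+hz) dz − Σ_{|γ|≤L} h^{|γ|} (f^{(γ)}(x)/γ!) ∫ F(z) z^γ dz ). Then R is bounded on ℝ^d × (0,∞), and for every B > 0 one has sup_{‖x‖≤B} |R(x,h)| → 0 as h → 0. In particular, ∫ F(z) f(x+hz) dz = Σ_{|γ|≤L} h^{|γ|} (f^{(γ)}(x)/γ!) ∫ F(z) z^γ dz + O(h^L) uniformly in x and + o(h^L) locally uniformly in x. -/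
open MeasureTheory Filter Topology

noncomputable section

/-- `ℝ^d` as a pi type; `volume` is `d`-dimensional Lebesgue measure. -/
abbrev Vec (d : ℕ) := Fin d → ℝ

/-- The Euclidean norm on `ℝ^d`. -/
def euclNorm {d : ℕ} (z : Vec d) : ℝ := Real.sqrt (∑ i, z i ^ 2)

/-- Partial derivative in direction `i`. -/
noncomputable def pd {d : ℕ} (i : Fin d) (g : Vec d → ℝ) : Vec d → ℝ :=
  fun x => lineDeriv ℝ g x (Pi.single i 1)

/-- Iterated partial derivative `g^{(γ)}` for a multi-index `γ`. -/
noncomputable def mderiv {d : ℕ} (γ : Fin d → ℕ) (g : Vec d → ℝ) : Vec d → ℝ :=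
  (List.finRange d).foldr (fun i F => (pd i)^[γ i] F) g

/-- The finite set of all multi-indices `γ ∈ ℕ₀^d` with `|γ| ≤ L`. -/
def multiIdxUpTo (d L : ℕ) : Finset (Fin d → ℕ) :=
  (Fintype.piFinset fun _ : Fin d => Finset.range (L + 1)).filter fun γ => ∑ i, γ i ≤ L

/-!
Along the line `t ↦ x + t • v` the `k`-th derivative of `f` is `k!` times the degree-`k` Taylor
term `∑_{|γ| = k} f^{(γ)} v^γ / γ!`. The Lagrange form of Taylor's theorem on that line, with
`v = h • z`, and homogeneity in `v` turn the pointwise remainder divided by `h ^ L` into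
`T_L(x + θ h z; z) - T_L(x; z)` with `θ ∈ [0, 1]`, where `T_L` is the term of top degree. Bounded
derivatives of order `L` dominate this difference by a multiple of `‖z‖ ^ L`, uniformly in `x` and
`h`, and their continuity makes it tend to `0` as `(h, x) → (0, x₀)`. Integrating against `F`,
dominated convergence yields both claims.
-/

section MultiIndex

open scoped Nat

variable {ι : Type*} [Fintype ι]

/-- The monomial `z^γ / γ!`, the basis function of multivariate Taylor expansions. -/
def dividedMonomial (γ : ι → ℕ) (z : ι → ℝ) : ℝ := ∏ i, z i ^ γ i / (γ i)!

lemma dividedMonomial_eq_div (γ : ι → ℕ) (z : ι → ℝ) :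
    dividedMonomial γ z = (∏ i, z i ^ γ i) / (∏ i, (γ i)! : ℕ) := by
  rw [dividedMonomial, Finset.prod_div_distrib, Nat.cast_prod]

lemma dividedMonomial_smul (γ : ι → ℕ) (h : ℝ) (z : ι → ℝ) :
    dividedMonomial γ (h • z) = h ^ (∑ i, γ i) * dividedMonomial γ z := by
  simp only [dividedMonomial, Pi.smul_apply, smul_eq_mul, mul_pow, mul_div_assoc,
    Finset.prod_mul_distrib, Finset.prod_pow_eq_pow_sum]

variable [DecidableEq ι]

lemma mem_piAntidiag_univ {k : ℕ} {γ : ι → ℕ} :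
    γ ∈ Finset.piAntidiag Finset.univ k ↔ ∑ i, γ i = k := by
  simp [Finset.mem_piAntidiag]

lemma sum_add_single (γ : ι → ℕ) (i : ι) :
    ∑ j, (γ + Pi.single i 1 : ι → ℕ) j = ∑ j, γ j + 1 := by
  simp [Finset.sum_add_distrib]

lemma succ_mul_dividedMonomial_add_single (γ : ι → ℕ) (i : ι) (z : ι → ℝ) :
    (γ i + 1) * dividedMonomial (γ + Pi.single i 1) z = z i * dividedMonomial γ z := by
  have hrest : ∏ j ∈ Finset.univ.erase i,
      z j ^ (γ + Pi.single i 1 : ι → ℕ) j / ((γ + Pi.single i 1 : ι → ℕ) j)! =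
        ∏ j ∈ Finset.univ.erase i, z j ^ γ j / (γ j)! := by
    refine Finset.prod_congr rfl fun j hj => ?_
    rw [Pi.add_apply, Pi.single_eq_of_ne (Finset.ne_of_mem_erase hj), add_zero]
  rw [dividedMonomial, dividedMonomial, ← Finset.mul_prod_erase _ _ (Finset.mem_univ i), hrest,
    ← Finset.mul_prod_erase _ (fun j => z j ^ γ j / ((γ j)! : ℝ)) (Finset.mem_univ i),
    Pi.add_apply, Pi.single_eq_same, Nat.factorial_succ]
  push_cast
  field_simp
  ring

lemma sum_piAntidiag_add_single {M : Type*} [AddCommMonoid M] (k : ℕ) (i : ι) (b : (ι → ℕ) → M) :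
    ∑ γ ∈ Finset.piAntidiag Finset.univ k, (γ i + 1) • b (γ + Pi.single i 1) =
      ∑ γ ∈ Finset.piAntidiag Finset.univ (k + 1), γ i • b γ := by
  refine Finset.sum_of_injOn (· + Pi.single i 1) (add_left_injective _).injOn ?_ ?_ ?_
  · intro γ hγ
    simp_all only [Finset.mem_coe, mem_piAntidiag_univ, sum_add_single]
  · intro γ hγ hγ_image
    suffices γ i = 0 by rw [this, zero_smul]
    by_contra hγi
    have hle : Pi.single i 1 ≤ γ := fun j => by
      rcases eq_or_ne j i with rfl | hji
      · simpa using Nat.one_le_iff_ne_zero.2 hγi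
      · simp [hji]
    refine hγ_image ⟨γ - Pi.single i 1, ?_, tsub_add_cancel_of_le hle⟩
    rw [mem_piAntidiag_univ, ← tsub_add_cancel_of_le hle, sum_add_single] at hγ
    exact mem_piAntidiag_univ.2 (Nat.succ_injective hγ)
  · simp

lemma sum_piAntidiag_sum_add_single {M : Type*} [AddCommMonoid M] (k : ℕ) (b : (ι → ℕ) → M) :
    ∑ γ ∈ Finset.piAntidiag Finset.univ k, ∑ i, (γ i + 1) • b (γ + Pi.single i 1) =
      (k + 1) • ∑ γ ∈ Finset.piAntidiag Finset.univ (k + 1), b γ := by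
  rw [Finset.sum_comm, Finset.smul_sum]
  simp only [sum_piAntidiag_add_single]
  rw [Finset.sum_comm]
  refine Finset.sum_congr rfl fun γ hγ => ?_
  rw [← Finset.sum_smul, mem_piAntidiag_univ.1 hγ]

lemma mem_multiIdxUpTo {d L : ℕ} {γ : Fin d → ℕ} : γ ∈ multiIdxUpTo d L ↔ ∑ i, γ i ≤ L := by
  have hle (i : Fin d) : γ i ≤ ∑ i, γ i :=
    Finset.single_le_sum (fun _ _ => Nat.zero_le _) (Finset.mem_univ i)
  simp only [multiIdxUpTo, Finset.mem_filter, Fintype.mem_piFinset, Finset.mem_range,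
    and_iff_right_iff_imp]
  exact fun h i => Nat.lt_succ_of_le ((hle i).trans h)

lemma sum_multiIdxUpTo {M : Type*} [AddCommMonoid M] {d : ℕ} (L : ℕ) (b : (Fin d → ℕ) → M) :
    ∑ γ ∈ multiIdxUpTo d L, b γ =
      ∑ k ∈ Finset.range (L + 1), ∑ γ ∈ Finset.piAntidiag Finset.univ k, b γ := by
  have hmaps : ∀ γ ∈ multiIdxUpTo d L, ∑ i, γ i ∈ Finset.range (L + 1) := fun γ hγ =>
    Finset.mem_range_succ_iff.2 (mem_multiIdxUpTo.1 hγ)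
  rw [← Finset.sum_fiberwise_of_maps_to hmaps]
  refine Finset.sum_congr rfl fun k hk => Finset.sum_congr ?_ fun _ _ => rfl
  ext γ
  rw [Finset.mem_filter, mem_multiIdxUpTo, mem_piAntidiag_univ, and_iff_right_iff_imp]
  exact fun h => h.trans_le (Finset.mem_range_succ_iff.1 hk)

end MultiIndex

section PartialDerivatives

variable {d : ℕ} {g : Vec d → ℝ}

lemma pd_eq_fderiv_apply (hg : Differentiable ℝ g) (i : Fin d) :
    pd i g = fun x => fderiv ℝ g x (Pi.single i 1) :=
  funext fun x => (hg x).lineDeriv_eq_fderiv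

lemma contDiff_pd {n : WithTop ℕ∞} (hg : ContDiff ℝ (n + 1) g) (i : Fin d) :
    ContDiff ℝ n (pd i g) := by
  rw [pd_eq_fderiv_apply (hg.differentiable (by simp)) i]
  exact (hg.fderiv_right le_rfl).clm_apply contDiff_const

lemma pd_comm (hg : ContDiff ℝ 2 g) (i j : Fin d) : pd i (pd j g) = pd j (pd i g) := by
  have hg' : ContDiff ℝ (1 + 1) g := by rwa [one_add_one_eq_two]
  have hpd (k : Fin d) : Differentiable ℝ (pd k g) := (contDiff_pd hg' k).differentiable one_ne_zero
  have hfderiv : Differentiable ℝ (fderiv ℝ g) :=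
    (hg'.fderiv_right le_rfl).differentiable one_ne_zero
  have hsymm (x : Vec d) : IsSymmSndFDerivAt ℝ g x := hg.contDiffAt.isSymmSndFDerivAt (by simp)
  rw [pd_eq_fderiv_apply (hpd j), pd_eq_fderiv_apply (hpd i),
    pd_eq_fderiv_apply (hg.differentiable two_ne_zero),
    pd_eq_fderiv_apply (hg.differentiable two_ne_zero)]
  funext x
  rw [fderiv_clm_apply (hfderiv x) (by fun_prop), fderiv_clm_apply (hfderiv x) (by fun_prop)]
  simpa using hsymm x (Pi.single i 1) (Pi.single j 1)

lemma contDiff_iterate_pd {n : WithTop ℕ∞} (i : Fin d) (m : ℕ) (hg : ContDiff ℝ (n + m) g) :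
    ContDiff ℝ n ((pd i)^[m] g) := by
  induction m generalizing g with
  | zero => simpa using hg
  | succ m ih =>
    rw [Nat.cast_succ, ← add_assoc] at hg
    exact ih (contDiff_pd hg i)

lemma iterate_pd_pd (i j : Fin d) (m : ℕ) (hg : ContDiff ℝ (m + 1) g) :
    (pd j)^[m] (pd i g) = pd i ((pd j)^[m] g) := by
  induction m generalizing g with
  | zero => rfl
  | succ m ih =>
    rw [Nat.cast_succ] at hg
    have hg₂ : ContDiff ℝ 2 g := hg.of_le (by norm_cast; lia)
    rw [Function.iterate_succ_apply, Function.iterate_succ_apply, pd_comm hg₂ j i,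
      ih (contDiff_pd hg j)]

/-- The operator `∏_{i ∈ l} ∂_i^{γ_i}` for a list `l` of coordinate directions. It allows induction
on `l`, and `mderiv γ` is the case `l = List.finRange d`. -/
def mderivAlong (γ : Fin d → ℕ) (l : List (Fin d)) (g : Vec d → ℝ) : Vec d → ℝ :=
  l.foldr (fun i G => (pd i)^[γ i] G) g

lemma mderivAlong_congr {γ γ' : Fin d → ℕ} {l : List (Fin d)} (h : ∀ i ∈ l, γ i = γ' i) :
    mderivAlong γ l g = mderivAlong γ' l g :=
  List.foldr_ext _ _ _ fun i hi G => by rw [h i hi]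

lemma contDiff_mderivAlong {n : WithTop ℕ∞} (γ : Fin d → ℕ) (l : List (Fin d))
    (hg : ContDiff ℝ (n + (l.map γ).sum) g) : ContDiff ℝ n (mderivAlong γ l g) := by
  induction l generalizing n with
  | nil => simpa [mderivAlong] using hg
  | cons a l ih =>
    rw [List.map_cons, List.sum_cons, Nat.cast_add, ← add_assoc] at hg
    exact contDiff_iterate_pd a (γ a) (ih hg)

lemma mderivAlong_add_single (γ : Fin d → ℕ) {i : Fin d} {l : List (Fin d)} (hl : l.Nodup)
    (hi : i ∈ l) (hg : ContDiff ℝ ((l.map γ).sum + 1) g) :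
    mderivAlong (γ + Pi.single i 1) l g = pd i (mderivAlong γ l g) := by
  induction l with
  | nil => simp at hi
  | cons a l ih =>
    rw [List.nodup_cons] at hl
    change (pd a)^[(γ + Pi.single i 1 : Fin d → ℕ) a] (mderivAlong (γ + Pi.single i 1) l g) =
      pd i ((pd a)^[γ a] (mderivAlong γ l g))
    rcases eq_or_ne i a with rfl | hia
    · have hcongr : ∀ j ∈ l, (γ + Pi.single i 1 : Fin d → ℕ) j = γ j := fun j hj => by
        simp [ne_of_mem_of_not_mem hj hl.1]
      rw [mderivAlong_congr hcongr, Pi.add_apply, Pi.single_eq_same, Function.iterate_succ_apply']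
    · rw [List.map_cons, List.sum_cons, Nat.cast_add, add_right_comm] at hg
      rw [ih hl.2 (List.mem_of_ne_of_mem hia hi) (hg.of_le (by norm_cast; lia)), Pi.add_apply,
        Pi.single_eq_of_ne hia.symm, add_zero]
      exact iterate_pd_pd i a _ (contDiff_mderivAlong γ l hg)

lemma contDiff_mderiv {n : WithTop ℕ∞} (γ : Fin d → ℕ)
    (hg : ContDiff ℝ (n + (∑ i, γ i : ℕ)) g) : ContDiff ℝ n (mderiv γ g) :=
  contDiff_mderivAlong γ _ (by rwa [← Fin.sum_univ_def])

lemma mderiv_add_single (γ : Fin d → ℕ) (i : Fin d) (hg : ContDiff ℝ ((∑ i, γ i : ℕ) + 1) g) :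
    mderiv (γ + Pi.single i 1) g = pd i (mderiv γ g) :=
  mderivAlong_add_single γ (List.nodup_finRange d) (List.mem_finRange i)
    (by rwa [← Fin.sum_univ_def])

lemma mderiv_zero (g : Vec d → ℝ) : mderiv 0 g = g :=
  List.foldr_fixed' (fun _ => rfl) _

lemma hasDerivAt_comp_line (hg : Differentiable ℝ g) (x v : Vec d) (t : ℝ) :
    HasDerivAt (fun t : ℝ => g (x + t • v)) (∑ i, v i * pd i g (x + t • v)) t := by
  have hline : HasDerivAt (fun t : ℝ => x + t • v) v t := by
    simpa using ((hasDerivAt_id t).smul_const v).const_add x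
  refine ((hg (x + t • v)).hasFDerivAt.comp_hasDerivAt t hline).congr_deriv ?_
  simp only [pd_eq_fderiv_apply hg]
  generalize fderiv ℝ g (x + t • v) = A
  conv_lhs => rw [pi_eq_sum_univ' v, map_sum]
  simp

end PartialDerivatives

section Taylor

open scoped Nat

variable {d : ℕ} {f : Vec d → ℝ}

/-- The homogeneous degree-`k` part `∑_{|γ| = k} f^{(γ)}(x) v^γ / γ!` of the Taylor expansion of `f`
at `x`. -/
def taylorTerm (f : Vec d → ℝ) (k : ℕ) (x v : Vec d) : ℝ :=
  ∑ γ ∈ Finset.piAntidiag Finset.univ k, mderiv γ f x * dividedMonomial γ v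

/-- The Taylor polynomial `∑_{|γ| ≤ L} f^{(γ)}(x) v^γ / γ!` of `f` at `x`, as a function of the
increment `v`. -/
def taylorPoly (f : Vec d → ℝ) (L : ℕ) (x v : Vec d) : ℝ :=
  ∑ γ ∈ multiIdxUpTo d L, mderiv γ f x * dividedMonomial γ v

lemma taylorPoly_eq_sum_taylorTerm (f : Vec d → ℝ) (L : ℕ) (x v : Vec d) :
    taylorPoly f L x v = ∑ k ∈ Finset.range (L + 1), taylorTerm f k x v :=
  sum_multiIdxUpTo L _

lemma taylorTerm_zero (f : Vec d → ℝ) (x v : Vec d) : taylorTerm f 0 x v = f x := by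
  simp [taylorTerm, mderiv_zero, dividedMonomial]

lemma taylorTerm_smul (f : Vec d → ℝ) (k : ℕ) (x : Vec d) (h : ℝ) (v : Vec d) :
    taylorTerm f k x (h • v) = h ^ k * taylorTerm f k x v := by
  rw [taylorTerm, taylorTerm, Finset.mul_sum]
  refine Finset.sum_congr rfl fun γ hγ => ?_
  rw [dividedMonomial_smul, mem_piAntidiag_univ.1 hγ, mul_left_comm]

lemma continuous_taylorTerm {k : ℕ} (hf : ContDiff ℝ k f) (v : Vec d) :
    Continuous fun x => taylorTerm f k x v := by
  refine continuous_finsetSum _ fun γ hγ => ?_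
  have hγ_contDiff : ContDiff ℝ 0 (mderiv γ f) :=
    contDiff_mderiv γ (by rwa [zero_add, mem_piAntidiag_univ.1 hγ])
  exact hγ_contDiff.continuous.mul_const _

lemma hasDerivAt_taylorTerm_comp_line {k : ℕ} (hf : ContDiff ℝ (k + 1) f) (x v : Vec d) (t : ℝ) :
    HasDerivAt (fun t : ℝ => taylorTerm f k (x + t • v) v)
      ((k + 1) * taylorTerm f (k + 1) (x + t • v) v) t := by
  have hsum := sum_piAntidiag_sum_add_single k fun γ => mderiv γ f (x + t • v) * dividedMonomial γ v
  rw [nsmul_eq_mul, Nat.cast_succ] at hsum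
  rw [taylorTerm, ← hsum]
  refine HasDerivAt.fun_sum fun γ hγ => ?_
  rw [← mem_piAntidiag_univ.1 hγ] at hf
  have hγ_contDiff : ContDiff ℝ 1 (mderiv γ f) := contDiff_mderiv γ (by rwa [add_comm])
  refine ((hasDerivAt_comp_line (hγ_contDiff.differentiable one_ne_zero) x v t).mul_const
    (dividedMonomial γ v)).congr_deriv ?_
  rw [Finset.sum_mul]
  refine Finset.sum_congr rfl fun i _ => ?_
  rw [mderiv_add_single γ i hf, nsmul_eq_mul, Nat.cast_succ]
  linear_combination (-pd i (mderiv γ f) (x + t • v)) * succ_mul_dividedMonomial_add_single γ i v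

lemma iteratedDeriv_comp_line {k : ℕ} (hf : ContDiff ℝ k f) (x v : Vec d) :
    iteratedDeriv k (fun t : ℝ => f (x + t • v)) = fun t => k ! * taylorTerm f k (x + t • v) v := by
  induction k with
  | zero => simp [taylorTerm_zero]
  | succ k ih =>
    rw [Nat.cast_succ] at hf
    rw [iteratedDeriv_succ, ih hf.of_succ]
    funext t
    rw [((hasDerivAt_taylorTerm_comp_line hf x v t).const_mul _).deriv, Nat.factorial_succ]
    push_cast
    ring

lemma taylorWithinEval_comp_line {n : ℕ} (hf : ContDiff ℝ n f) (x v : Vec d) :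
    taylorWithinEval (fun t : ℝ => f (x + t • v)) n (Set.uIcc 0 1) 0 1 = taylorPoly f n x v := by
  have hline : ContDiff ℝ n fun t : ℝ => f (x + t • v) := hf.comp (by fun_prop)
  rw [taylor_within_apply, taylorPoly_eq_sum_taylorTerm]
  refine Finset.sum_congr rfl fun k hk => ?_
  have hkn : (k : WithTop ℕ∞) ≤ n := by exact_mod_cast Finset.mem_range_succ_iff.1 hk
  rw [iteratedDerivWithin_eq_iteratedDeriv (uniqueDiffOn_uIcc zero_ne_one)
    (hline.contDiffAt.of_le hkn) Set.left_mem_uIcc, iteratedDeriv_comp_line (hf.of_le hkn)]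
  simp [Nat.factorial_ne_zero]

theorem exists_sub_taylorPoly_eq {L : ℕ} (hf : ContDiff ℝ L f) (x v : Vec d) :
    ∃ θ ∈ Set.Icc (0 : ℝ) 1,
      f (x + v) - taylorPoly f L x v = taylorTerm f L (x + θ • v) v - taylorTerm f L x v := by
  cases L with
  | zero => exact ⟨1, by simp, by simp [taylorPoly_eq_sum_taylorTerm, taylorTerm_zero]⟩
  | succ n =>
    have hline : ContDiff ℝ (n + 1) fun t : ℝ => f (x + t • v) := hf.comp (by fun_prop)
    obtain ⟨θ, hθ, hlagrange⟩ := taylor_mean_remainder_lagrange_iteratedDeriv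
      (zero_ne_one (α := ℝ)) hline.contDiffOn
    rw [Set.uIoo_of_le zero_le_one] at hθ
    refine ⟨θ, Set.Ioo_subset_Icc_self hθ, ?_⟩
    rw [taylorWithinEval_comp_line (hf.of_le (by norm_cast; lia)), iteratedDeriv_comp_line hf,
      sub_zero, one_pow, mul_one, mul_div_cancel_left₀ _ (by positivity), one_smul] at hlagrange
    rw [taylorPoly_eq_sum_taylorTerm, Finset.sum_range_succ, ← taylorPoly_eq_sum_taylorTerm]
    linarith

/-- The Taylor remainder of `f` at `x` with increment `h • z`, divided by `h ^ L`. It is meaningful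
only for `h ≠ 0`. -/
def scaledRemainder (f : Vec d → ℝ) (L : ℕ) (x : Vec d) (h : ℝ) (z : Vec d) : ℝ :=
  (f (x + h • z) - taylorPoly f L x (h • z)) / h ^ L

lemma continuous_scaledRemainder (hf : Continuous f) (L : ℕ) (x : Vec d) (h : ℝ) :
    Continuous (scaledRemainder f L x h) := by
  unfold scaledRemainder taylorPoly dividedMonomial
  fun_prop

lemma exists_scaledRemainder_eq {L : ℕ} (hf : ContDiff ℝ L f) (x z : Vec d) {h : ℝ} (hh : h ≠ 0) :
    ∃ θ ∈ Set.Icc (0 : ℝ) 1, scaledRemainder f L x h z =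
      taylorTerm f L (x + θ • h • z) z - taylorTerm f L x z := by
  obtain ⟨θ, hθ, hrem⟩ := exists_sub_taylorPoly_eq hf x (h • z)
  refine ⟨θ, hθ, ?_⟩
  rw [scaledRemainder, hrem, taylorTerm_smul, taylorTerm_smul, ← mul_sub,
    mul_div_cancel_left₀ _ (pow_ne_zero L hh)]

lemma tendsto_scaledRemainder {L : ℕ} (hf : ContDiff ℝ L f) (x₀ z : Vec d) :
    Tendsto (fun p : ℝ × Vec d => scaledRemainder f L p.2 p.1 z) (𝓝[≠] 0 ×ˢ 𝓝 x₀) (𝓝 0) := by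
  choose! θ hθ hrem using fun (p : ℝ × Vec d) (hp : p.1 ≠ 0) =>
    exists_scaledRemainder_eq hf p.2 z hp
  set l : Filter (ℝ × Vec d) := 𝓝[≠] 0 ×ˢ 𝓝 x₀
  have hne : ∀ᶠ p in l, p.1 ≠ 0 := tendsto_fst.eventually self_mem_nhdsWithin
  have hstep : Tendsto (fun p : ℝ × Vec d => p.1 • z) l (𝓝 0) := by
    have hfst : Tendsto (fun p : ℝ × Vec d => p.1) l (𝓝 0) :=
      tendsto_fst.mono_right nhdsWithin_le_nhds
    simpa using hfst.smul_const z
  have hθ_bdd : IsBoundedUnder (· ≤ ·) l (norm ∘ θ) := isBoundedUnder_of_eventually_le (a := 1) <|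
    hne.mono fun p hp => abs_le.2 ⟨by linarith [(hθ p hp).1], (hθ p hp).2⟩
  have hpoint : Tendsto (fun p => p.2 + θ p • p.1 • z) l (𝓝 x₀) := by
    simpa using tendsto_snd.add (hθ_bdd.smul_tendsto_zero hstep)
  have hterm : Tendsto (fun y => taylorTerm f L y z) (𝓝 x₀) (𝓝 (taylorTerm f L x₀ z)) :=
    (continuous_taylorTerm hf z).tendsto x₀
  have hdiff := (hterm.comp hpoint).sub (hterm.comp tendsto_snd)
  rw [sub_self] at hdiff
  exact hdiff.congr' (hne.mono fun p hp => (hrem p hp).symm)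

end Taylor

section EuclideanNorm

variable {d : ℕ}

lemma euclNorm_eq_norm_toLp (z : Vec d) : euclNorm z = ‖WithLp.toLp 2 z‖ := by
  simp [euclNorm, EuclideanSpace.norm_eq]

lemma euclNorm_nonneg (z : Vec d) : 0 ≤ euclNorm z := Real.sqrt_nonneg _

lemma continuous_euclNorm : Continuous (euclNorm : Vec d → ℝ) := by
  unfold euclNorm
  fun_prop

lemma abs_apply_le_euclNorm (z : Vec d) (i : Fin d) : |z i| ≤ euclNorm z := by
  rw [euclNorm_eq_norm_toLp]
  exact PiLp.norm_apply_le (WithLp.toLp 2 z) i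

lemma isCompact_setOf_euclNorm_le (B : ℝ) : IsCompact {x : Vec d | euclNorm x ≤ B} := by
  refine (isCompact_closedBall (0 : Vec d) B).of_isClosed_subset
    (isClosed_le continuous_euclNorm continuous_const) fun x hx => ?_
  rw [mem_closedBall_zero_iff]
  exact ((pi_norm_le_iff_of_nonneg (euclNorm_nonneg x)).2 (abs_apply_le_euclNorm x)).trans hx

lemma abs_prod_pow_le_euclNorm_pow (γ : Fin d → ℕ) (z : Vec d) :
    |∏ i, z i ^ γ i| ≤ euclNorm z ^ ∑ i, γ i := by
  rw [Finset.abs_prod, ← Finset.prod_pow_eq_pow_sum]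
  refine Finset.prod_le_prod (fun _ _ => abs_nonneg _) fun i _ => ?_
  rw [abs_pow]
  exact pow_le_pow_left₀ (abs_nonneg _) (abs_apply_le_euclNorm z i) _

lemma abs_dividedMonomial_le (γ : Fin d → ℕ) (z : Vec d) :
    |dividedMonomial γ z| ≤ euclNorm z ^ ∑ i, γ i := by
  have hfact : (1 : ℝ) ≤ (∏ i, (γ i).factorial : ℕ) := by
    exact_mod_cast Finset.prod_pos fun i _ => (γ i).factorial_pos
  rw [dividedMonomial_eq_div, abs_div, Nat.abs_cast]
  exact (div_le_self (abs_nonneg _) hfact).trans (abs_prod_pow_le_euclNorm_pow γ z)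

lemma pow_le_one_add_pow {a : ℝ} (ha : 0 ≤ a) {k L : ℕ} (hk : k ≤ L) : a ^ k ≤ 1 + a ^ L := by
  rcases le_total a 1 with h | h
  · exact (pow_le_one₀ ha h).trans (le_add_of_nonneg_right (pow_nonneg ha L))
  · exact (pow_le_pow_right₀ h hk).trans (le_add_of_nonneg_left zero_le_one)

lemma exists_abs_taylorTerm_le {f : Vec d → ℝ} {L : ℕ}
    (hfb : ∀ γ : Fin d → ℕ, ∑ i, γ i = L → ∃ C : ℝ, ∀ x, |mderiv γ f x| ≤ C) :
    ∃ C, ∀ x z, |taylorTerm f L x z| ≤ C * euclNorm z ^ L := by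
  choose! C hC using hfb
  refine ⟨∑ γ ∈ Finset.piAntidiag Finset.univ L, C γ, fun x z => ?_⟩
  rw [taylorTerm, Finset.sum_mul]
  refine (Finset.abs_sum_le_sum_abs _ _).trans (Finset.sum_le_sum fun γ hγ => ?_)
  have hγL := mem_piAntidiag_univ.1 hγ
  rw [abs_mul]
  exact mul_le_mul (hC γ hγL x) (hγL ▸ abs_dividedMonomial_le γ z) (abs_nonneg _)
    ((abs_nonneg _).trans (hC γ hγL x))

lemma exists_abs_scaledRemainder_le {f : Vec d → ℝ} {L : ℕ} (hf : ContDiff ℝ L f)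
    (hfb : ∀ γ : Fin d → ℕ, ∑ i, γ i = L → ∃ C : ℝ, ∀ x, |mderiv γ f x| ≤ C) :
    ∃ C, ∀ x z, ∀ h ≠ 0, |scaledRemainder f L x h z| ≤ C * euclNorm z ^ L := by
  obtain ⟨C, hC⟩ := exists_abs_taylorTerm_le hfb
  refine ⟨2 * C, fun x z h hh => ?_⟩
  obtain ⟨θ, -, hrem⟩ := exists_scaledRemainder_eq hf x z hh
  calc |scaledRemainder f L x h z|
      ≤ |taylorTerm f L (x + θ • h • z) z| + |taylorTerm f L x z| := hrem ▸ abs_sub _ _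
    _ ≤ C * euclNorm z ^ L + C * euclNorm z ^ L := add_le_add (hC _ z) (hC x z)
    _ = 2 * C * euclNorm z ^ L := by ring

end EuclideanNorm

section Integral

variable {d L : ℕ} {f F : Vec d → ℝ} {μ : Measure (Vec d)}

lemma integrable_abs_mul_euclNorm_pow {k : ℕ} (hk : k ≤ L) (hF : AEStronglyMeasurable F μ)
    (hFi : Integrable (fun z => |F z| * (1 + euclNorm z ^ L)) μ) :
    Integrable (fun z => |F z| * euclNorm z ^ k) μ := by
  refine hFi.mono' (hF.norm.mul (continuous_euclNorm.pow k).aestronglyMeasurable)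
    (.of_forall fun z => ?_)
  rw [Real.norm_of_nonneg (mul_nonneg (abs_nonneg _) (pow_nonneg (euclNorm_nonneg z) k))]
  exact mul_le_mul_of_nonneg_left (pow_le_one_add_pow (euclNorm_nonneg z) hk) (abs_nonneg _)

lemma norm_mul_le_of_abs_le {a b c C : ℝ} (hb : |b| ≤ C * c) : ‖a * b‖ ≤ C * (|a| * c) := by
  rw [Real.norm_eq_abs, abs_mul, mul_left_comm]
  exact mul_le_mul_of_nonneg_left hb (abs_nonneg a)

lemma integrable_mul_of_abs_le {k : ℕ} {g : Vec d → ℝ} {C : ℝ} (hF : AEStronglyMeasurable F μ)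
    (hFk : Integrable (fun z => |F z| * euclNorm z ^ k) μ) (hg : Continuous g)
    (hgC : ∀ z, |g z| ≤ C * euclNorm z ^ k) : Integrable (fun z => F z * g z) μ :=
  (hFk.const_mul C).mono' (hF.mul hg.aestronglyMeasurable)
    (.of_forall fun z => norm_mul_le_of_abs_le (hgC z))

lemma integrable_mul_prod_pow (hF : AEStronglyMeasurable F μ)
    (hFi : Integrable (fun z => |F z| * (1 + euclNorm z ^ L)) μ) {γ : Fin d → ℕ}
    (hγ : ∑ i, γ i ≤ L) : Integrable (fun z => F z * ∏ i, z i ^ γ i) μ :=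
  integrable_mul_of_abs_le (C := 1) hF (integrable_abs_mul_euclNorm_pow hγ hF hFi) (by fun_prop)
    fun z => by simpa using abs_prod_pow_le_euclNorm_pow γ z

lemma mul_taylorPoly_smul (a : ℝ) (f : Vec d → ℝ) (L : ℕ) (x : Vec d) (h : ℝ) (z : Vec d) :
    a * taylorPoly f L x (h • z) = ∑ γ ∈ multiIdxUpTo d L,
      h ^ (∑ i, γ i) * (mderiv γ f x / ((∏ i, Nat.factorial (γ i) : ℕ) : ℝ)) *
        (a * ∏ i, z i ^ γ i) := by
  rw [taylorPoly, Finset.mul_sum]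
  refine Finset.sum_congr rfl fun γ _ => ?_
  rw [dividedMonomial_smul, dividedMonomial_eq_div]
  ring

lemma integrable_mul_taylorPoly (hF : AEStronglyMeasurable F μ)
    (hFi : Integrable (fun z => |F z| * (1 + euclNorm z ^ L)) μ) (f : Vec d → ℝ) (x : Vec d)
    (h : ℝ) : Integrable (fun z => F z * taylorPoly f L x (h • z)) μ := by
  simp only [mul_taylorPoly_smul]
  exact integrable_finsetSum _ fun γ hγ =>
    (integrable_mul_prod_pow hF hFi (mem_multiIdxUpTo.1 hγ)).const_mul _

lemma integral_mul_taylorPoly (hF : AEStronglyMeasurable F μ)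
    (hFi : Integrable (fun z => |F z| * (1 + euclNorm z ^ L)) μ) (f : Vec d → ℝ) (x : Vec d)
    (h : ℝ) :
    ∫ z, F z * taylorPoly f L x (h • z) ∂μ = ∑ γ ∈ multiIdxUpTo d L,
      h ^ (∑ i, γ i) * (mderiv γ f x / ((∏ i, Nat.factorial (γ i) : ℕ) : ℝ)) *
        ∫ z, F z * ∏ i, z i ^ γ i ∂μ := by
  simp only [mul_taylorPoly_smul, ← integral_const_mul]
  exact integral_finsetSum _ fun γ hγ =>
    (integrable_mul_prod_pow hF hFi (mem_multiIdxUpTo.1 hγ)).const_mul _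

lemma integrable_mul_scaledRemainder (hf : ContDiff ℝ L f)
    (hfb : ∀ γ : Fin d → ℕ, ∑ i, γ i = L → ∃ C : ℝ, ∀ x, |mderiv γ f x| ≤ C)
    (hF : AEStronglyMeasurable F μ) (hFL : Integrable (fun z => |F z| * euclNorm z ^ L) μ)
    (x : Vec d) {h : ℝ} (hh : h ≠ 0) : Integrable (fun z => F z * scaledRemainder f L x h z) μ := by
  obtain ⟨C, hC⟩ := exists_abs_scaledRemainder_le hf hfb
  exact integrable_mul_of_abs_le hF hFL (continuous_scaledRemainder hf.continuous L x h)
    fun z => hC x z h hh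

lemma integral_sub_div_eq_integral_mul_scaledRemainder (hf : ContDiff ℝ L f)
    (hfb : ∀ γ : Fin d → ℕ, ∑ i, γ i = L → ∃ C : ℝ, ∀ x, |mderiv γ f x| ≤ C)
    (hF : AEStronglyMeasurable F μ) (hFi : Integrable (fun z => |F z| * (1 + euclNorm z ^ L)) μ)
    (x : Vec d) {h : ℝ} (hh : h ≠ 0) :
    ((∫ z, F z * f (x + h • z) ∂μ) - ∑ γ ∈ multiIdxUpTo d L,
      h ^ (∑ i, γ i) * (mderiv γ f x / ((∏ i, Nat.factorial (γ i) : ℕ) : ℝ)) *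
        ∫ z, F z * ∏ i, z i ^ γ i ∂μ) / h ^ L = ∫ z, F z * scaledRemainder f L x h z ∂μ := by
  have hFL := integrable_abs_mul_euclNorm_pow le_rfl hF hFi
  have hsplit (z : Vec d) : F z * f (x + h • z) =
      h ^ L * (F z * scaledRemainder f L x h z) + F z * taylorPoly f L x (h • z) := by
    rw [scaledRemainder]
    field_simp
    ring
  simp only [hsplit]
  rw [integral_add ((integrable_mul_scaledRemainder hf hfb hF hFL x hh).const_mul _)
    (integrable_mul_taylorPoly hF hFi f x h), integral_mul_taylorPoly hF hFi, add_sub_cancel_right,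
    integral_const_mul, mul_div_cancel_left₀ _ (pow_ne_zero L hh)]

theorem exists_abs_integral_mul_scaledRemainder_le (hf : ContDiff ℝ L f)
    (hfb : ∀ γ : Fin d → ℕ, ∑ i, γ i = L → ∃ C : ℝ, ∀ x, |mderiv γ f x| ≤ C)
    (hFL : Integrable (fun z => |F z| * euclNorm z ^ L) μ) :
    ∃ C, ∀ x, ∀ h ≠ 0, |∫ z, F z * scaledRemainder f L x h z ∂μ| ≤ C := by
  obtain ⟨C, hC⟩ := exists_abs_scaledRemainder_le hf hfb
  exact ⟨∫ z, C * (|F z| * euclNorm z ^ L) ∂μ, fun x h hh => norm_integral_le_of_norm_le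
    (hFL.const_mul C) (.of_forall fun z => norm_mul_le_of_abs_le (hC x z h hh))⟩

theorem tendstoLocallyUniformly_integral_mul_scaledRemainder (hf : ContDiff ℝ L f)
    (hfb : ∀ γ : Fin d → ℕ, ∑ i, γ i = L → ∃ C : ℝ, ∀ x, |mderiv γ f x| ≤ C)
    (hF : AEStronglyMeasurable F μ) (hFL : Integrable (fun z => |F z| * euclNorm z ^ L) μ) :
    TendstoLocallyUniformly (fun h x => ∫ z, F z * scaledRemainder f L x h z ∂μ) (fun _ => 0)
      (𝓝[≠] 0) := by
  refine tendstoLocallyUniformly_iff_filter.2 fun x₀ => tendsto_prod_filter_iff.1 ?_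
  suffices Tendsto (fun p : ℝ × Vec d => ∫ z, F z * scaledRemainder f L p.2 p.1 z ∂μ)
      (𝓝[≠] 0 ×ˢ 𝓝 x₀) (𝓝 (∫ _, 0 ∂μ)) by rwa [integral_zero] at this
  obtain ⟨C, hC⟩ := exists_abs_scaledRemainder_le hf hfb
  have hne : ∀ᶠ p : ℝ × Vec d in 𝓝[≠] 0 ×ˢ 𝓝 x₀, p.1 ≠ 0 :=
    tendsto_fst.eventually self_mem_nhdsWithin
  refine tendsto_integral_filter_of_dominated_convergence
    (fun z => C * (|F z| * euclNorm z ^ L)) ?_ ?_ (hFL.const_mul C) ?_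
  · exact .of_forall fun p =>
      hF.mul (continuous_scaledRemainder hf.continuous L p.2 p.1).aestronglyMeasurable
  · exact hne.mono fun p hp => .of_forall fun z => norm_mul_le_of_abs_le (hC p.2 z p.1 hp)
  · exact .of_forall fun z => by simpa using (tendsto_scaledRemainder hf x₀ z).const_mul (F z)

end Integral

lemma exists_forall_abs_le_of_tendstoLocallyUniformly {d : ℕ} {G : ℝ → Vec d → ℝ}
    (hG : TendstoLocallyUniformly G (fun _ => 0) (𝓝[≠] 0)) (B : ℝ) {ε : ℝ} (hε : 0 < ε) :
    ∃ δ > 0, ∀ h ≠ 0, |h| < δ → ∀ x, euclNorm x ≤ B → |G h x| ≤ ε := by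
  have hunif : TendstoUniformlyOn G (fun _ => 0) (𝓝[≠] 0) {x | euclNorm x ≤ B} :=
    (tendstoLocallyUniformlyOn_iff_tendstoUniformlyOn_of_compact
      (isCompact_setOf_euclNorm_le B)).1 hG.tendstoLocallyUniformlyOn
  have hev := Metric.tendstoUniformlyOn_iff.1 hunif ε hε
  rw [eventually_nhdsWithin_iff, Metric.eventually_nhds_iff] at hev
  obtain ⟨δ, hδ, hGδ⟩ := hev
  refine ⟨δ, hδ, fun h hh hhδ x hx => ?_⟩
  simpa using (hGδ (by simpa using hhδ) hh x hx).le

theorem statement0_general {d L : ℕ} {f : Vec d → ℝ} (hf : ContDiff ℝ L f)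
    (hfb : ∀ γ : Fin d → ℕ, ∑ i, γ i = L → ∃ C : ℝ, ∀ x, |mderiv γ f x| ≤ C)
    {μ : Measure (Vec d)} {F : Vec d → ℝ} (hF : AEStronglyMeasurable F μ)
    (hFi : Integrable (fun z => |F z| * (1 + euclNorm z ^ L)) μ)
    {R : Vec d → ℝ → ℝ}
    (hR : ∀ (x : Vec d) (h : ℝ), R x h =
      ((∫ z, F z * f (x + h • z) ∂μ) -
        ∑ γ ∈ multiIdxUpTo d L,
          h ^ (∑ i, γ i) * (mderiv γ f x / ((∏ i, Nat.factorial (γ i) : ℕ) : ℝ)) *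
            ∫ z, F z * ∏ i, z i ^ γ i ∂μ) / h ^ L) :
    (∃ C : ℝ, ∀ (x : Vec d) (h : ℝ), 0 < h → |R x h| ≤ C) ∧
      ∀ B : ℝ, ∀ ε > (0 : ℝ), ∃ δ > (0 : ℝ), ∀ h : ℝ, 0 < h → h < δ →
        ∀ x : Vec d, euclNorm x ≤ B → |R x h| ≤ ε := by
  have hFL := integrable_abs_mul_euclNorm_pow le_rfl hF hFi
  have hR_eq (x : Vec d) {h : ℝ} (hh : 0 < h) : R x h = ∫ z, F z * scaledRemainder f L x h z ∂μ :=
    (hR x h).trans (integral_sub_div_eq_integral_mul_scaledRemainder hf hfb hF hFi x hh.ne')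
  refine ⟨?_, fun B ε hε => ?_⟩
  · obtain ⟨C, hC⟩ := exists_abs_integral_mul_scaledRemainder_le hf hfb hFL
    exact ⟨C, fun x h hh => hR_eq x hh ▸ hC x h hh.ne'⟩
  · obtain ⟨δ, hδ, hsmall⟩ := exists_forall_abs_le_of_tendstoLocallyUniformly
      (tendstoLocallyUniformly_integral_mul_scaledRemainder hf hfb hF hFL) B hε
    refine ⟨δ, hδ, fun h hh hhδ x hx => ?_⟩
    exact hR_eq x hh ▸ hsmall h hh.ne' (by rwa [abs_of_pos hh]) x hx

/-- Taylor expansion of `∫ F(z) f(x+hz) dz`, with remainder `O(h^L)`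
uniformly in `x` and `o(h^L)` locally uniformly in `x`. -/
theorem statement0 {d L : ℕ} (hd : 1 ≤ d) (hL : 1 ≤ L)
    (f : Vec d → ℝ) (hf : ContDiff ℝ (L : ℕ∞) f)
    (hfb : ∀ γ : Fin d → ℕ, (∑ i, γ i) ≤ L → ∃ C : ℝ, ∀ x, |mderiv γ f x| ≤ C)
    (F : Vec d → ℝ) (hF : Measurable F)
    (hFi : Integrable (fun z => |F z| * (1 + euclNorm z ^ L)))
    (R : Vec d → ℝ → ℝ)
    (hR : ∀ (x : Vec d) (h : ℝ), R x h =
      ((∫ z, F z * f (x + h • z)) -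
        ∑ γ ∈ multiIdxUpTo d L,
          h ^ (∑ i, γ i) * (mderiv γ f x / ((∏ i, Nat.factorial (γ i) : ℕ) : ℝ)) *
            ∫ z, F z * ∏ i, z i ^ γ i) / h ^ L) :
    (∃ C : ℝ, ∀ (x : Vec d) (h : ℝ), 0 < h → |R x h| ≤ C) ∧
      ∀ B > (0 : ℝ), ∀ ε > (0 : ℝ), ∃ δ > (0 : ℝ), ∀ h : ℝ, 0 < h → h < δ →
        ∀ x : Vec d, euclNorm x ≤ B → |R x h| ≤ ε :=
  let ⟨hbdd, hlim⟩ :=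
    statement0_general hf (fun γ hγ => hfb γ hγ.le) hF.aestronglyMeasurable hFi hR
  ⟨hbdd, fun B _ => hlim B⟩
end
end

section
/- Let f ∈ C_b^2(ℝ^d) and let K be a kernel satisfying (K0)–(K2). For h > 0 and x ∈ ℝ^d define s_h(x) := ∫ K(z) f(x+hz) dz ∈ ℝ, 𝔰_h(x) := ∫ K(z) z f(x+hz) dz ∈ ℝ^d, and S_h(x) := ∫ K(z) z zᵀ f(x+hz) dz ∈ Sym_d(ℝ). Then, as h → 0, locally uniformly in x, (s_h(x), 𝔰_h(x), S_h(x)) = J(f(x), h Df(x), h² D²f(x)) + o(h²); that is, for every B > 0, sup_{‖x‖≤B} h^{−2} ‖(s_h(x), 𝔰_h(x), S_h(x)) − J(f(x), h Df(x), h² D²f(x))‖ → 0 as h → 0, where Df and D²f denote the gradient and Hessian of f. -/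
open MeasureTheory Filter Topology

noncomputable section

/-- The space `H = ℝ × ℝ^d × ℝ^{d×d}` (symmetric matrices sit inside the third factor). -/
abbrev Htriple (d : ℕ) := ℝ × Vec d × (Fin d → Fin d → ℝ)

/-- The matrix `M` with `M_jj = (μ₄ - μ₂₂)/2`, `M_jk = μ₂₂` for `j ≠ k`. -/
def Mmat (d : ℕ) (μ4 μ22 : ℝ) : Fin d → Fin d → ℝ :=
  fun j k => if j = k then (μ4 - μ22) / 2 else μ22

/-- The linear operator `J(c,b,A) = (c + tr A/2, b, c I + A ⊙ M + (μ₂₂/2) tr A · I)`. -/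
def Jop {d : ℕ} (μ4 μ22 : ℝ) (v : Htriple d) : Htriple d :=
  (v.1 + (∑ i, v.2.2 i i) / 2, v.2.1,
    fun j k => (if j = k then v.1 else 0) + v.2.2 j k * Mmat d μ4 μ22 j k +
      (if j = k then μ22 / 2 * ∑ i, v.2.2 i i else 0))

/-- The norm `‖(c,b,A)‖ = (c² + ‖b‖² + ‖A‖_F²/2)^{1/2}` on `H`. -/
def Hnorm {d : ℕ} (v : Htriple d) : ℝ :=
  Real.sqrt (v.1 ^ 2 + (∑ i, v.2.1 i ^ 2) + (∑ j, ∑ k, v.2.2 j k ^ 2) / 2)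

/-!
Integrate the second-order Taylor expansion of `f` at `x` against `K(z) z^s`. By the Lagrange form
of the remainder, the error at the increment `hz`, divided by `h²`, tends to zero as
`(h, x) → (0, x₀)` and is dominated by a multiple of `‖z‖²`. Dominated convergence makes the
integrated error `o(h²)` jointly in `(h, x)` near every `(0, x₀)`, and compactness of balls makes
this locally uniform in `x`. The main term involves only the moments of `K` up to order four:
invariance under sign changes of single coordinates kills every moment of odd degree in some
coordinate, and what survives is an Isserlis-type formula for the fourth moments, with a correction
on the diagonal. Contracting it with the symmetric matrix `D²f` gives `J`.
-/

open Asymptotics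

section TaylorRemainder

variable {E : Type*} [NormedAddCommGroup E] [NormedSpace ℝ E] {f : E → ℝ}

/-- The second-order Taylor polynomial of `f` at `x`, as a function of the increment `v`. -/
def taylorPolynomialTwo (f : E → ℝ) (x v : E) : ℝ :=
  f x + fderiv ℝ f x v + 1 / 2 * iteratedFDeriv ℝ 2 f x fun _ => v

/-- The error of the second-order Taylor expansion of `f` at `x`, as a function of the
increment `v`. -/
def taylorRemainderTwo (f : E → ℝ) (x v : E) : ℝ :=
  f (x + v) - taylorPolynomialTwo f x v

theorem taylorRemainderTwo_zero (f : E → ℝ) (x : E) : taylorRemainderTwo f x 0 = 0 := by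
  have hD2 : (iteratedFDeriv ℝ 2 f x fun _ => 0) = 0 :=
    (iteratedFDeriv ℝ 2 f x).map_coord_zero 0 rfl
  simp [taylorRemainderTwo, taylorPolynomialTwo, hD2]

theorem continuous_taylorRemainderTwo (hf : ContDiff ℝ 2 f) (x : E) :
    Continuous (taylorRemainderTwo f x) := by
  have hfc : Continuous f := hf.continuous
  unfold taylorRemainderTwo taylorPolynomialTwo
  fun_prop

theorem deriv_comp_add_smul (hf : Differentiable ℝ f) (x v : E) :
    deriv (fun t : ℝ => f (x + t • v)) = fun t => fderiv ℝ f (x + t • v) v :=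
  funext fun _ => (hf _).deriv_comp_add_smul

theorem iteratedDeriv_two_comp_add_smul (hf : ContDiff ℝ 2 f) (x v : E) (t : ℝ) :
    iteratedDeriv 2 (fun t : ℝ => f (x + t • v)) t =
      iteratedFDeriv ℝ 2 f (x + t • v) fun _ => v := by
  have hf' : ContDiffAt ℝ ((1 : ℕ) + 1) f (x + t • v) := hf.contDiffAt
  rw [iteratedDeriv_succ, iteratedDeriv_one, deriv_comp_add_smul (hf.differentiable two_ne_zero)]
  simpa only [iteratedFDeriv_one_apply] using hf'.deriv_fderiv_add_smul (y := v)

theorem exists_taylorRemainderTwo_eq (hf : ContDiff ℝ 2 f) (x v : E) :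
    ∃ t ∈ Set.Ioo (0 : ℝ) 1, taylorRemainderTwo f x v =
      1 / 2 * (iteratedFDeriv ℝ 2 f (x + t • v) - iteratedFDeriv ℝ 2 f x) fun _ => v := by
  have hline : ContDiff ℝ 2 fun t : ℝ => f (x + t • v) := by fun_prop
  obtain ⟨t, ht, hlagrange⟩ := taylor_mean_remainder_lagrange_iteratedDeriv (n := 1)
    zero_ne_one hline.contDiffOn
  have hderiv : derivWithin (fun t : ℝ => f (x + t • v)) (Set.Icc 0 1) 0 = fderiv ℝ f x v := by
    rw [(hline.differentiable two_ne_zero 0).derivWithin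
      (uniqueDiffOn_Icc zero_lt_one 0 (Set.left_mem_Icc.2 zero_le_one)),
      deriv_comp_add_smul (hf.differentiable two_ne_zero)]
    simp
  rw [Set.uIoo_of_le zero_le_one] at ht
  refine ⟨t, ht, ?_⟩
  have hfirstOrder : f (x + v) - (f x + fderiv ℝ f x v) =
      (iteratedFDeriv ℝ 2 f (x + t • v) fun _ => v) / 2 := by
    simpa [taylorWithinEval_succ, hderiv, iteratedDeriv_two_comp_add_smul hf] using hlagrange
  rw [taylorRemainderTwo, taylorPolynomialTwo, sub_apply]
  linarith

theorem exists_abs_taylorRemainderTwo_le (hf : ContDiff ℝ 2 f) (x v : E) :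
    ∃ t ∈ Set.Ioo (0 : ℝ) 1, |taylorRemainderTwo f x v| ≤
      1 / 2 * ‖iteratedFDeriv ℝ 2 f (x + t • v) - iteratedFDeriv ℝ 2 f x‖ * ‖v‖ ^ 2 := by
  obtain ⟨t, ht, hR⟩ := exists_taylorRemainderTwo_eq hf x v
  refine ⟨t, ht, ?_⟩
  rw [hR, abs_mul, abs_of_pos one_half_pos, mul_assoc]
  gcongr
  exact (iteratedFDeriv ℝ 2 f (x + t • v) - iteratedFDeriv ℝ 2 f x).le_opNorm_mul_pow_of_le
    (pi_norm_const_le v)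

theorem abs_taylorRemainderTwo_le {C : ℝ} (hf : ContDiff ℝ 2 f)
    (hC : ∀ y, ‖iteratedFDeriv ℝ 2 f y‖ ≤ C) (x v : E) :
    |taylorRemainderTwo f x v| ≤ C * ‖v‖ ^ 2 := by
  obtain ⟨t, -, hR⟩ := exists_abs_taylorRemainderTwo_le hf x v
  have hD2 : ‖iteratedFDeriv ℝ 2 f (x + t • v) - iteratedFDeriv ℝ 2 f x‖ ≤ 2 * C :=
    (norm_sub_le _ _).trans (by linarith [hC (x + t • v), hC x])
  calc |taylorRemainderTwo f x v| ≤ 1 / 2 * (2 * C) * ‖v‖ ^ 2 := by grw [hR, hD2]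
    _ = C * ‖v‖ ^ 2 := by ring

theorem abs_taylorRemainderTwo_smul_div_sq_le {C : ℝ} (hf : ContDiff ℝ 2 f)
    (hC : ∀ y, ‖iteratedFDeriv ℝ 2 f y‖ ≤ C) (h : ℝ) (x z : E) :
    |taylorRemainderTwo f x (h • z) / h ^ 2| ≤ C * ‖z‖ ^ 2 := by
  have hC₀ : 0 ≤ C := (norm_nonneg _).trans (hC x)
  rw [abs_div, abs_sq]
  refine div_le_of_le_mul₀ (sq_nonneg h) (by positivity) ?_
  refine (abs_taylorRemainderTwo_le hf hC x (h • z)).trans_eq ?_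
  rw [norm_smul, mul_pow, Real.norm_eq_abs, sq_abs]
  ring

theorem tendsto_taylorRemainderTwo_div_sq (hf : ContDiff ℝ 2 f) (x₀ z : E) :
    Tendsto (fun p : ℝ × E => taylorRemainderTwo f p.2 (p.1 • z) / p.1 ^ 2)
      (𝓝 (0, x₀)) (𝓝 0) := by
  choose t ht hR using exists_abs_taylorRemainderTwo_le hf
  have hsnd : Tendsto Prod.snd (𝓝 ((0 : ℝ), x₀)) (𝓝 x₀) := continuous_snd.tendsto _
  have hsmul : Tendsto (fun p : ℝ × E => p.1 • z) (𝓝 (0, x₀)) (𝓝 0) := by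
    simpa using (continuous_fst.tendsto ((0 : ℝ), x₀)).smul_const z
  have hincr : Tendsto (fun p : ℝ × E => t p.2 (p.1 • z) • p.1 • z) (𝓝 (0, x₀)) (𝓝 0) := by
    refine squeeze_zero_norm (fun p => ?_) (tendsto_zero_iff_norm_tendsto_zero.1 hsmul)
    obtain ⟨ht₀, ht₁⟩ := ht p.2 (p.1 • z)
    rw [norm_smul, Real.norm_of_nonneg ht₀.le]
    exact mul_le_of_le_one_left (norm_nonneg _) ht₁.le
  have hD2 : Tendsto (fun p : ℝ × E => iteratedFDeriv ℝ 2 f (p.2 + t p.2 (p.1 • z) • p.1 • z) -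
      iteratedFDeriv ℝ 2 f p.2) (𝓝 (0, x₀)) (𝓝 0) := by
    have hcont := (hf.continuous_iteratedFDeriv (m := 2) le_rfl).tendsto x₀
    have hpoint := hsnd.add hincr
    rw [add_zero] at hpoint
    simpa using (hcont.comp hpoint).sub (hcont.comp hsnd)
  have hbound := (hD2.norm.const_mul (1 / 2)).mul_const (‖z‖ ^ 2)
  rw [norm_zero, mul_zero, zero_mul] at hbound
  refine squeeze_zero_norm (fun p => ?_) hbound
  rw [norm_div, norm_pow, Real.norm_eq_abs, Real.norm_eq_abs, sq_abs]
  refine div_le_of_le_mul₀ (sq_nonneg _) (by positivity) ((hR p.2 (p.1 • z)).trans_eq ?_)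
  rw [norm_smul, mul_pow, Real.norm_eq_abs, sq_abs]
  ring

variable [MeasurableSpace E] [OpensMeasurableSpace E] {μ : Measure E}
  {G : Type*} [NormedAddCommGroup G] [NormedSpace ℝ G] {φ : E → G} {C : ℝ}

theorem integrable_taylorRemainderTwo_smul (hf : ContDiff ℝ 2 f)
    (hC : ∀ y, ‖iteratedFDeriv ℝ 2 f y‖ ≤ C) (hφ : AEStronglyMeasurable φ μ)
    (hφ2 : Integrable (fun z => ‖z‖ ^ 2 • φ z) μ) (h : ℝ) (x : E) :
    Integrable (fun z => taylorRemainderTwo f x (h • z) • φ z) μ := by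
  have hRm : Continuous fun z => taylorRemainderTwo f x (h • z) :=
    (continuous_taylorRemainderTwo hf x).comp (continuous_const_smul h)
  refine (hφ2.norm.const_mul (C * h ^ 2)).mono' (hRm.aestronglyMeasurable.smul hφ)
    (Eventually.of_forall fun z => ?_)
  rw [norm_smul, norm_smul, norm_pow, norm_norm, Real.norm_eq_abs]
  grw [abs_taylorRemainderTwo_le hf hC x (h • z)]
  rw [norm_smul, mul_pow, Real.norm_eq_abs, sq_abs]
  exact le_of_eq (by ring)

theorem isLittleO_integral_taylorRemainderTwo_smul (hf : ContDiff ℝ 2 f)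
    (hC : ∀ y, ‖iteratedFDeriv ℝ 2 f y‖ ≤ C) (hφ : AEStronglyMeasurable φ μ)
    (hφ2 : Integrable (fun z => ‖z‖ ^ 2 • φ z) μ) (x₀ : E) :
    (fun p : ℝ × E => ∫ z, taylorRemainderTwo f p.2 (p.1 • z) • φ z ∂μ)
      =o[𝓝 (0, x₀)] fun p => p.1 ^ 2 := by
  have hvanish : ∀ p : ℝ × E, p.1 ^ 2 = 0 →
      ∫ z, taylorRemainderTwo f p.2 (p.1 • z) • φ z ∂μ = 0 := by
    intro p hp
    simp [pow_eq_zero_iff two_ne_zero |>.1 hp, taylorRemainderTwo_zero]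
  rw [← isLittleOTVS_iff_isLittleO (𝕜 := ℝ),
    isLittleOTVS_iff_tendsto_inv_smul (Eventually.of_forall hvanish)]
  simp only [← integral_smul, smul_smul]
  rw [← integral_zero E G]
  refine tendsto_integral_filter_of_dominated_convergence (fun z => C * ‖‖z‖ ^ 2 • φ z‖)
    (Eventually.of_forall fun p => ?_) (Eventually.of_forall fun p =>
      Eventually.of_forall fun z => ?_) (hφ2.norm.const_mul C) (Eventually.of_forall fun z => ?_)
  · simpa only [Pi.smul_def, smul_smul] using
      (integrable_taylorRemainderTwo_smul hf hC hφ hφ2 p.1 p.2).aestronglyMeasurable.const_smul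
        (p.1 ^ 2)⁻¹
  · rw [inv_mul_eq_div, norm_smul, norm_smul, norm_pow, norm_norm, ← mul_assoc]
    exact mul_le_mul_of_nonneg_right
      (abs_taylorRemainderTwo_smul_div_sq_le hf hC p.1 p.2 z) (norm_nonneg _)
  · simpa only [inv_mul_eq_div, zero_smul] using
      (tendsto_taylorRemainderTwo_div_sq hf x₀ z).smul_const (φ z)

end TaylorRemainder

section Moments

variable {ι : Type*}

theorem abs_prod_map_le_norm_pow_card [Fintype ι] (z : ι → ℝ) (s : Multiset ι) :
    |(s.map z).prod| ≤ ‖z‖ ^ s.card := by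
  induction s using Multiset.induction_on with
  | empty => simp
  | cons i s ih =>
    rw [Multiset.map_cons, Multiset.prod_cons, Multiset.card_cons, pow_succ', abs_mul]
    exact mul_le_mul (norm_le_pi_norm z i) ih (abs_nonneg _) (norm_nonneg _)

theorem continuous_prod_map (s : Multiset ι) : Continuous fun z : ι → ℝ => (s.map z).prod :=
  continuous_multiset_prod s fun i _ => continuous_apply i

theorem prod_map_update_neg [DecidableEq ι] (z : ι → ℝ) (i : ι) (s : Multiset ι) :
    (s.map (Function.update z i (-z i))).prod = (-1) ^ s.count i * (s.map z).prod := by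
  induction s using Multiset.induction_on with
  | empty => simp
  | cons a s ih =>
    rw [Multiset.map_cons, Multiset.prod_cons, ih, Multiset.map_cons, Multiset.prod_cons]
    by_cases hia : i = a
    · subst hia
      rw [Function.update_self, Multiset.count_cons_self]
      ring
    · rw [Function.update_of_ne (Ne.symm hia), Multiset.count_cons_of_ne hia]
      ring

theorem involutive_update_neg [DecidableEq ι] (i : ι) :
    Function.Involutive fun z : ι → ℝ => Function.update z i (-z i) :=
  fun z => by simp

theorem integrable_mul_norm_pow_of_le {E : Type*} [NormedAddCommGroup E] [MeasurableSpace E]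
    [OpensMeasurableSpace E] {μ : Measure E} {K : E → ℝ} {m n : ℕ} (hK : Integrable K μ)
    (hKn : Integrable (fun z => K z * ‖z‖ ^ n) μ) (hmn : m ≤ n) :
    Integrable (fun z => K z * ‖z‖ ^ m) μ := by
  refine (hK.norm.add hKn.norm).mono' (hK.aestronglyMeasurable.mul (by fun_prop))
    (Eventually.of_forall fun z => ?_)
  have hpow : ‖z‖ ^ m ≤ 1 + ‖z‖ ^ n := by
    rcases le_total ‖z‖ 1 with hz | hz
    · exact (pow_le_one₀ (norm_nonneg z) hz).trans (le_add_of_nonneg_right (by positivity))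
    · exact (pow_le_pow_right₀ hz hmn).trans (le_add_of_nonneg_left zero_le_one)
  simp only [Pi.add_apply, norm_mul, norm_pow, norm_norm]
  grw [hpow]
  exact le_of_eq (by ring)

variable [Fintype ι]

/-- The moment `μ_α = ∫ K(z) z^α dz`, where the multi-index `α` is recorded as the multiset in which
the coordinate `i` occurs `α i` times. -/
def moment (K : (ι → ℝ) → ℝ) (s : Multiset ι) : ℝ :=
  ∫ z, K z * (s.map z).prod

variable {K : (ι → ℝ) → ℝ} {n : ℕ} {s : Multiset ι}

theorem integrable_mul_prod_map (hK : Integrable K) (hKn : Integrable fun z => K z * ‖z‖ ^ n)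
    (hs : s.card ≤ n) : Integrable fun z => K z * (s.map z).prod := by
  refine (integrable_mul_norm_pow_of_le hK hKn hs).norm.mono'
    (hK.aestronglyMeasurable.mul (continuous_prod_map s).aestronglyMeasurable)
    (Eventually.of_forall fun z => ?_)
  simp only [norm_mul, norm_pow, norm_norm]
  gcongr
  exact abs_prod_map_le_norm_pow_card z s

theorem integrable_norm_sq_smul_mul_prod_map (hK : Integrable K)
    (hKn : Integrable fun z => K z * ‖z‖ ^ n) (hs : s.card + 2 ≤ n) :
    Integrable fun z => ‖z‖ ^ 2 • (K z * (s.map z).prod) := by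
  have hφ := (integrable_mul_prod_map (s := s) hK hKn (by lia)).aestronglyMeasurable
  refine (integrable_mul_norm_pow_of_le hK hKn hs).norm.mono'
    ((by fun_prop : Continuous fun z : ι → ℝ => ‖z‖ ^ 2).aestronglyMeasurable.smul hφ)
    (Eventually.of_forall fun z => ?_)
  simp only [norm_smul, norm_mul, norm_pow, norm_norm]
  grw [Real.norm_eq_abs (Multiset.prod _), abs_prod_map_le_norm_pow_card z s]
  exact le_of_eq (by ring)

theorem measurePreserving_update_neg [DecidableEq ι] (i : ι) :
    MeasurePreserving (fun z : ι → ℝ => Function.update z i (-z i)) := by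
  have hcoord : ∀ j : ι, MeasurePreserving (fun t : ℝ => if j = i then -t else t) := by
    intro j
    split_ifs
    · exact Measure.measurePreserving_neg volume
    · exact MeasurePreserving.id volume
  convert volume_preserving_pi hcoord using 2 with z
  ext j
  rw [Function.update_apply]
  split_ifs with hj <;> simp [hj]

theorem moment_eq_zero_of_odd_count [DecidableEq ι] {i : ι}
    (hKi : ∀ z, K (Function.update z i (-z i)) = K z) (hs : Odd (s.count i)) :
    moment K s = 0 := by
  let e : (ι → ℝ) ≃ᵐ (ι → ℝ) := MeasurableEquiv.ofInvolutive _ (involutive_update_neg i)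
    (measurePreserving_update_neg i).measurable
  have hflip : moment K s = -moment K s := by
    calc moment K s = ∫ z, K (e z) * (s.map (e z)).prod :=
          ((measurePreserving_update_neg i).integral_comp e.measurableEmbedding _).symm
      _ = ∫ z, -(K z * (s.map z).prod) := by
          refine integral_congr_ae (Eventually.of_forall fun z => ?_)
          simp [e, hKi, prod_map_update_neg, hs.neg_one_pow]
      _ = -moment K s := integral_neg _
  linarith

theorem moment_eq_zero_of_odd_card [DecidableEq ι]
    (hKsymm : ∀ i z, K (Function.update z i (-z i)) = K z) (hs : Odd s.card) :
    moment K s = 0 := by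
  obtain ⟨i, hi⟩ : ∃ i, Odd (s.count i) := by
    by_contra! heven
    simp only [Nat.not_odd_iff_even] at heven
    rw [← Multiset.sum_count_eq_card (s := Finset.univ) fun a _ => Finset.mem_univ a] at hs
    exact Nat.not_even_iff_odd.2 hs (Finset.even_sum _ fun i _ => heven i)
  exact moment_eq_zero_of_odd_count (hKsymm i) hi

end Moments

section MomentExpansion

variable {ι : Type*} [Fintype ι]

theorem mul_comp_add_smul_mul_prod_map (K f : (ι → ℝ) → ℝ) (s : Multiset ι) (h : ℝ)
    (x z : ι → ℝ) :
    K z * f (x + h • z) * (s.map z).prod =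
      taylorRemainderTwo f x (h • z) • (K z * (s.map z).prod) +
        taylorPolynomialTwo f x (h • z) * (K z * (s.map z).prod) := by
  rw [taylorRemainderTwo, smul_eq_mul]
  ring

variable {K f : (ι → ℝ) → ℝ} {n : ℕ} {s : Multiset ι}

theorem clm_apply_eq_sum [DecidableEq ι] {F : Type*} [NormedAddCommGroup F] [NormedSpace ℝ F]
    (L : (ι → ℝ) →L[ℝ] F) (z : ι → ℝ) : L z = ∑ i, z i • L (Pi.single i 1) := by
  conv_lhs => rw [pi_eq_sum_univ' z]
  simp

theorem iteratedFDeriv_two_apply_const_eq_sum [DecidableEq ι] (f : (ι → ℝ) → ℝ) (x z : ι → ℝ) :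
    (iteratedFDeriv ℝ 2 f x fun _ => z) =
      ∑ a, ∑ b, z a * (z b * iteratedFDeriv ℝ 2 f x ![Pi.single a 1, Pi.single b 1]) := by
  simp only [iteratedFDeriv_two_apply, Matrix.cons_val_zero, Matrix.cons_val_one]
  rw [clm_apply_eq_sum (fderiv ℝ (fderiv ℝ f) x) z]
  simp only [sum_apply, smul_apply, smul_eq_mul]
  refine Finset.sum_congr rfl fun a _ => ?_
  rw [clm_apply_eq_sum (fderiv ℝ (fderiv ℝ f) x (Pi.single a 1)) z, Finset.mul_sum]
  rfl

/-- The second-order expansion in `h` of `∫ K(z) z^s f(x + hz) dz`: the integral of `K(z) z^s`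
against the Taylor polynomial of `f`, written in terms of the moments of `K`. -/
def momentExpansion [DecidableEq ι] (K f : (ι → ℝ) → ℝ) (s : Multiset ι) (h : ℝ) (x : ι → ℝ) : ℝ :=
  f x * moment K s + h * ∑ i, fderiv ℝ f x (Pi.single i 1) * moment K (i ::ₘ s) +
    h ^ 2 / 2 * ∑ a, ∑ b,
      iteratedFDeriv ℝ 2 f x ![Pi.single a 1, Pi.single b 1] * moment K (a ::ₘ b ::ₘ s)

theorem taylorPolynomialTwo_smul_mul_prod_map [DecidableEq ι] (f : (ι → ℝ) → ℝ)
    (s : Multiset ι) (h c : ℝ) (x z : ι → ℝ) :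
    taylorPolynomialTwo f x (h • z) * (c * (s.map z).prod) =
      f x * (c * (s.map z).prod) +
      h * ∑ i, fderiv ℝ f x (Pi.single i 1) * (c * ((i ::ₘ s).map z).prod) +
      h ^ 2 / 2 * ∑ a, ∑ b, iteratedFDeriv ℝ 2 f x ![Pi.single a 1, Pi.single b 1] *
        (c * ((a ::ₘ b ::ₘ s).map z).prod) := by
  simp only [taylorPolynomialTwo, clm_apply_eq_sum (fderiv ℝ f x) (h • z),
    iteratedFDeriv_two_apply_const_eq_sum, Multiset.map_cons, Multiset.prod_cons, Pi.smul_apply,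
    smul_eq_mul, Finset.mul_sum, add_mul, Finset.sum_mul]
  refine congrArg₂ _ (congrArg₂ _ rfl (Finset.sum_congr rfl fun i _ => ?_))
    (Finset.sum_congr rfl fun a _ => Finset.sum_congr rfl fun b _ => ?_)
  · ring
  · ring

theorem integrable_taylorPolynomialTwo_smul_mul (hK : Integrable K)
    (hKn : Integrable fun z => K z * ‖z‖ ^ n) (hs : s.card + 2 ≤ n) (h : ℝ) (x : ι → ℝ) :
    Integrable fun z => taylorPolynomialTwo f x (h • z) * (K z * (s.map z).prod) := by
  classical
  simp only [taylorPolynomialTwo_smul_mul_prod_map]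
  refine (((integrable_mul_prod_map hK hKn (by lia)).const_mul _).add
    ((integrable_finsetSum _ fun i _ => ?_).const_mul _)).add
    ((integrable_finsetSum _ fun a _ => integrable_finsetSum _ fun b _ => ?_).const_mul _)
  · exact (integrable_mul_prod_map hK hKn (by simp only [Multiset.card_cons]; lia)).const_mul _
  · exact (integrable_mul_prod_map hK hKn (by simp only [Multiset.card_cons]; lia)).const_mul _

theorem integral_taylorPolynomialTwo_smul_mul [DecidableEq ι] (hK : Integrable K)
    (hKn : Integrable fun z => K z * ‖z‖ ^ n) (hs : s.card + 2 ≤ n) (h : ℝ) (x : ι → ℝ) :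
    ∫ z, taylorPolynomialTwo f x (h • z) * (K z * (s.map z).prod) = momentExpansion K f s h x := by
  have hint₀ : Integrable fun z => K z * (s.map z).prod :=
    integrable_mul_prod_map hK hKn (by lia)
  have hint₁ : ∀ i, Integrable fun z => K z * ((i ::ₘ s).map z).prod := fun i =>
    integrable_mul_prod_map hK hKn (by simp only [Multiset.card_cons]; lia)
  have hint₂ : ∀ a b, Integrable fun z => K z * ((a ::ₘ b ::ₘ s).map z).prod := fun a b =>
    integrable_mul_prod_map hK hKn (by simp only [Multiset.card_cons]; lia)
  have hintSum₁ : Integrable fun z =>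
      ∑ i, fderiv ℝ f x (Pi.single i 1) * (K z * ((i ::ₘ s).map z).prod) :=
    integrable_finsetSum _ fun i _ => (hint₁ i).const_mul _
  have hintRow₂ : ∀ a, Integrable fun z => ∑ b,
      iteratedFDeriv ℝ 2 f x ![Pi.single a 1, Pi.single b 1] *
        (K z * ((a ::ₘ b ::ₘ s).map z).prod) := fun a =>
    integrable_finsetSum _ fun b _ => (hint₂ a b).const_mul _
  have hintSum₂ := integrable_finsetSum Finset.univ fun a _ => hintRow₂ a
  have hintSum₀₁ : Integrable fun z => f x * (K z * (s.map z).prod) +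
      h * ∑ i, fderiv ℝ f x (Pi.single i 1) * (K z * ((i ::ₘ s).map z).prod) :=
    (hint₀.const_mul _).add (hintSum₁.const_mul _)
  simp only [taylorPolynomialTwo_smul_mul_prod_map]
  rw [integral_add hintSum₀₁ (hintSum₂.const_mul _),
    integral_add (hint₀.const_mul _) (hintSum₁.const_mul _), integral_const_mul,
    integral_const_mul, integral_const_mul, integral_finsetSum _ fun i _ => (hint₁ i).const_mul _,
    integral_finsetSum _ fun a _ => hintRow₂ a]
  simp only [integral_finsetSum _ fun b _ => (hint₂ _ b).const_mul _, integral_const_mul]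
  rfl

variable {C : ℝ}

theorem integrable_mul_comp_add_smul_mul_prod_map (hf : ContDiff ℝ 2 f)
    (hC : ∀ y, ‖iteratedFDeriv ℝ 2 f y‖ ≤ C) (hK : Integrable K)
    (hKn : Integrable fun z => K z * ‖z‖ ^ n) (hs : s.card + 2 ≤ n) (h : ℝ) (x : ι → ℝ) :
    Integrable fun z => K z * f (x + h • z) * (s.map z).prod := by
  simp only [mul_comp_add_smul_mul_prod_map]
  exact (integrable_taylorRemainderTwo_smul hf hC
    (integrable_mul_prod_map hK hKn (by lia)).aestronglyMeasurable
    (integrable_norm_sq_smul_mul_prod_map hK hKn hs) h x).add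
    (integrable_taylorPolynomialTwo_smul_mul hK hKn hs h x)

theorem isLittleO_integral_sub_momentExpansion [DecidableEq ι] (hf : ContDiff ℝ 2 f)
    (hC : ∀ y, ‖iteratedFDeriv ℝ 2 f y‖ ≤ C) (hK : Integrable K)
    (hKn : Integrable fun z => K z * ‖z‖ ^ n) (hs : s.card + 2 ≤ n) (x₀ : ι → ℝ) :
    (fun p : ℝ × (ι → ℝ) => (∫ z, K z * f (p.2 + p.1 • z) * (s.map z).prod) -
      momentExpansion K f s p.1 p.2) =o[𝓝 (0, x₀)] fun p => p.1 ^ 2 := by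
  have hφ : AEStronglyMeasurable (fun z => K z * (s.map z).prod) :=
    (integrable_mul_prod_map hK hKn (by lia)).aestronglyMeasurable
  have hφ2 := integrable_norm_sq_smul_mul_prod_map hK hKn hs
  refine (isLittleO_integral_taylorRemainderTwo_smul hf hC hφ hφ2 x₀).congr_left fun p => ?_
  simp only [mul_comp_add_smul_mul_prod_map]
  rw [integral_add (integrable_taylorRemainderTwo_smul hf hC hφ hφ2 p.1 p.2)
    (integrable_taylorPolynomialTwo_smul_mul hK hKn hs p.1 p.2),
    integral_taylorPolynomialTwo_smul_mul hK hKn hs, add_sub_cancel_right]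

end MomentExpansion

section FourthMoments

variable {ι : Type*} [Fintype ι]

theorem moment_four_same (K : (ι → ℝ) → ℝ) (i : ι) :
    moment K {i, i, i, i} = ∫ z, K z * z i ^ 4 := by
  simp only [moment, Multiset.insert_eq_cons, Multiset.map_cons, Multiset.map_singleton,
    Multiset.prod_cons, Multiset.prod_singleton]
  congr! 2 with z
  ring

theorem moment_two_two (K : (ι → ℝ) → ℝ) (i j : ι) :
    moment K {i, i, j, j} = ∫ z, K z * z i ^ 2 * z j ^ 2 := by
  simp only [moment, Multiset.insert_eq_cons, Multiset.map_cons, Multiset.map_singleton,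
    Multiset.prod_cons, Multiset.prod_singleton]
  congr! 2 with z
  ring

variable [DecidableEq ι] {K : (ι → ℝ) → ℝ} {μ4 μ22 : ℝ}

theorem moment_four_eq (hKsymm : ∀ i z, K (Function.update z i (-z i)) = K z)
    (hμ4 : ∀ i, μ4 = ∫ z, K z * z i ^ 4)
    (hμ22 : ∀ i j, i ≠ j → μ22 = ∫ z, K z * z i ^ 2 * z j ^ 2) (a b j k : ι) :
    moment K {a, b, j, k} =
      μ22 * ((if a = b ∧ j = k then 1 else 0) + (if a = j ∧ b = k then 1 else 0) +
        (if a = k ∧ b = j then 1 else 0)) +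
      (μ4 - 3 * μ22) * if a = b ∧ a = j ∧ a = k then 1 else 0 := by
  have hpair : ∀ i j, i ≠ j → moment K {i, i, j, j} = μ22 := fun i j hij =>
    (moment_two_two K i j).trans (hμ22 i j hij).symm
  have hodd : ∀ i, Odd (Multiset.count i {a, b, j, k}) → moment K {a, b, j, k} = 0 := fun i =>
    moment_eq_zero_of_odd_count (hKsymm i)
  simp only [Multiset.insert_eq_cons, Multiset.count_cons, Multiset.count_singleton] at hodd
  by_cases hall : a = b ∧ a = j ∧ a = k
  · obtain ⟨rfl, rfl, rfl⟩ := hall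
    simp only [moment_four_same, ← hμ4 a, and_self, if_true]
    ring
  by_cases hab : a = b ∧ j = k
  · obtain ⟨rfl, rfl⟩ := hab
    rw [hpair a j (by tauto)]
    grind
  by_cases haj : a = j ∧ b = k
  · obtain ⟨rfl, rfl⟩ := haj
    have hperm : ({a, b, a, b} : Multiset ι) = {a, a, b, b} :=
      congrArg (a ::ₘ ·) (Multiset.cons_swap b a {b})
    rw [hperm, hpair a b (by tauto)]
    grind
  by_cases hak : a = k ∧ b = j
  · obtain ⟨rfl, rfl⟩ := hak
    have hperm : ({a, b, b, a} : Multiset ι) = {a, a, b, b} := by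
      simp only [Multiset.insert_eq_cons, ← Multiset.cons_zero, Multiset.cons_swap b a]
    rw [hperm, hpair a b (by tauto)]
    grind
  have hzero : moment K {a, b, j, k} = 0 := by
    rcases eq_or_ne a b with rfl | hne
    · exact hodd j (by grind)
    by_cases ha : a = j ∨ a = k
    · exact hodd b (by grind)
    · exact hodd a (by grind)
  simp only [hzero, if_neg hall, if_neg hab, if_neg haj, if_neg hak]
  ring

theorem sum_sum_mul_moment_four (hKsymm : ∀ i z, K (Function.update z i (-z i)) = K z)
    (hμ4 : ∀ i, μ4 = ∫ z, K z * z i ^ 4)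
    (hμ22 : ∀ i j, i ≠ j → μ22 = ∫ z, K z * z i ^ 2 * z j ^ 2) (A : ι → ι → ℝ) (j k : ι) :
    ∑ a, ∑ b, A a b * moment K {a, b, j, k} =
      μ22 * ((if j = k then ∑ i, A i i else 0) + A j k + A k j) +
        (μ4 - 3 * μ22) * if j = k then A j j else 0 := by
  simp only [moment_four_eq hKsymm hμ4 hμ22, mul_add, Finset.sum_add_distrib, ite_and, mul_ite,
    mul_one, mul_zero, Finset.sum_ite_irrel, Finset.sum_const_zero, Finset.sum_ite_eq,
    Finset.sum_ite_eq', Finset.mem_univ, if_true, ← Finset.sum_mul]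
  split_ifs <;> ring

end FourthMoments

section NormalizedKernel

variable {ι : Type*} [Fintype ι] [DecidableEq ι] {K : (ι → ℝ) → ℝ} {μ4 μ22 : ℝ}

theorem momentExpansion_zero (hKsymm : ∀ i z, K (Function.update z i (-z i)) = K z)
    (hK0 : moment K 0 = 1) (hK2 : ∀ i j, moment K {i, j} = if i = j then 1 else 0)
    (f : (ι → ℝ) → ℝ) (h : ℝ) (x : ι → ℝ) :
    momentExpansion K f 0 h x =
      f x + h ^ 2 / 2 * ∑ i, iteratedFDeriv ℝ 2 f x ![Pi.single i 1, Pi.single i 1] := by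
  have hodd : ∀ i, moment K {i} = 0 := fun i => moment_eq_zero_of_odd_card hKsymm (by simp)
  simp only [Multiset.insert_eq_cons] at hK2
  simp [momentExpansion, hK0, hodd, hK2]

theorem momentExpansion_singleton (hKsymm : ∀ i z, K (Function.update z i (-z i)) = K z)
    (hK2 : ∀ i j, moment K {i, j} = if i = j then 1 else 0)
    (f : (ι → ℝ) → ℝ) (h : ℝ) (x : ι → ℝ) (i : ι) :
    momentExpansion K f {i} h x = h * fderiv ℝ f x (Pi.single i 1) := by
  have hodd₁ : moment K {i} = 0 := moment_eq_zero_of_odd_card hKsymm (by simp)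
  have hpair : ∀ a, moment K (a ::ₘ {i}) = if a = i then 1 else 0 := fun a => hK2 a i
  have hodd₃ : ∀ a b, moment K (a ::ₘ b ::ₘ {i}) = 0 := fun a b =>
    moment_eq_zero_of_odd_card hKsymm (by decide : Odd 3)
  simp [momentExpansion, hodd₁, hpair, hodd₃]

theorem momentExpansion_pair (hKsymm : ∀ i z, K (Function.update z i (-z i)) = K z)
    (hK2 : ∀ i j, moment K {i, j} = if i = j then 1 else 0)
    (hμ4 : ∀ i, μ4 = ∫ z, K z * z i ^ 4)
    (hμ22 : ∀ i j, i ≠ j → μ22 = ∫ z, K z * z i ^ 2 * z j ^ 2)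
    {f : (ι → ℝ) → ℝ} {x : ι → ℝ} (hf : ContDiffAt ℝ 2 f x) (h : ℝ) (j k : ι) :
    momentExpansion K f {j, k} h x =
      (if j = k then f x else 0) + h ^ 2 / 2 *
        (μ22 * ((if j = k then ∑ i, iteratedFDeriv ℝ 2 f x ![Pi.single i 1, Pi.single i 1] else 0) +
          2 * iteratedFDeriv ℝ 2 f x ![Pi.single j 1, Pi.single k 1]) +
        (μ4 - 3 * μ22) *
          if j = k then iteratedFDeriv ℝ 2 f x ![Pi.single j 1, Pi.single j 1] else 0) := by
  have hodd : ∀ i, moment K (i ::ₘ {j, k}) = 0 := fun i =>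
    moment_eq_zero_of_odd_card hKsymm (by decide : Odd 3)
  have hhessian : iteratedFDeriv ℝ 2 f x ![Pi.single k 1, Pi.single j 1] =
      iteratedFDeriv ℝ 2 f x ![Pi.single j 1, Pi.single k 1] := by
    simpa [iteratedFDeriv_two_apply] using
      hf.isSymmSndFDerivAt (by simp) (Pi.single k 1) (Pi.single j 1)
  have hfour := sum_sum_mul_moment_four hKsymm hμ4 hμ22
    (fun a b => iteratedFDeriv ℝ 2 f x ![Pi.single a 1, Pi.single b 1]) j k
  simp only [Multiset.insert_eq_cons] at hK2 hodd hfour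
  simp only [momentExpansion, Multiset.insert_eq_cons, hK2, hodd, hfour, hhessian, mul_zero,
    Finset.sum_const_zero, mul_ite, mul_one]
  ring

end NormalizedKernel

section LocalMoments

variable {d : ℕ}

/-- The local moments `(s_h(x), 𝔰_h(x), S_h(x))` of `f` at `x` with respect to the kernel `K`. -/
def localMoments (K f : Vec d → ℝ) (h : ℝ) (x : Vec d) : Htriple d :=
  (∫ z, K z * f (x + h • z), ∫ z, (K z * f (x + h • z)) • z,
    fun j k => ∫ z, K z * f (x + h • z) * z j * z k)

/-- The scaled second-order jet `(f(x), h Df(x), h² D²f(x))`, to which `J` is applied. -/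
def scaledJet (f : Vec d → ℝ) (h : ℝ) (x : Vec d) : Htriple d :=
  (f x, fun i => h * fderiv ℝ f x (Pi.single i 1),
    fun j k => h ^ 2 * iteratedFDeriv ℝ 2 f x ![Pi.single j 1, Pi.single k 1])

variable {K f : Vec d → ℝ} {μ4 μ22 C : ℝ}

theorem Jop_scaledJet (hKsymm : ∀ i z, K (Function.update z i (-z i)) = K z)
    (hK0 : moment K 0 = 1) (hK2 : ∀ i j, moment K {i, j} = if i = j then 1 else 0)
    (hμ4 : ∀ i, μ4 = ∫ z, K z * z i ^ 4)
    (hμ22 : ∀ i j, i ≠ j → μ22 = ∫ z, K z * z i ^ 2 * z j ^ 2)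
    (hf : ContDiff ℝ 2 f) (h : ℝ) (x : Vec d) :
    Jop μ4 μ22 (scaledJet f h x) =
      (momentExpansion K f 0 h x, fun i => momentExpansion K f {i} h x,
        fun j k => momentExpansion K f {j, k} h x) := by
  simp only [momentExpansion_zero hKsymm hK0 hK2, momentExpansion_singleton hKsymm hK2,
    momentExpansion_pair hKsymm hK2 hμ4 hμ22 hf.contDiffAt, Jop, scaledJet, Mmat, ← Finset.mul_sum]
  refine Prod.ext (by ring) (Prod.ext rfl (funext₂ fun j k => ?_))
  rcases eq_or_ne j k with rfl | hjk
  · simp only [if_true]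
    ring
  · simp only [if_neg hjk]
    ring

theorem localMoments_eq (hf : ContDiff ℝ 2 f) (hC : ∀ y, ‖iteratedFDeriv ℝ 2 f y‖ ≤ C)
    (hK : Integrable K) (hK4 : Integrable fun z => K z * ‖z‖ ^ 4) (h : ℝ) (x : Vec d) :
    localMoments K f h x =
      (∫ z, K z * f (x + h • z) * (Multiset.map z 0).prod,
        fun i => ∫ z, K z * f (x + h • z) * (Multiset.map z {i}).prod,
        fun j k => ∫ z, K z * f (x + h • z) * (Multiset.map z {j, k}).prod) := by
  have hint : ∀ i, Integrable fun z => ((K z * f (x + h • z)) • z) i := fun i => by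
    simpa using integrable_mul_comp_add_smul_mul_prod_map (s := {i}) hf hC hK hK4 (by simp) h x
  simp only [localMoments, Multiset.map_zero, Multiset.prod_zero, mul_one, Multiset.insert_eq_cons,
    Multiset.map_cons, Multiset.map_singleton, Multiset.prod_cons, Multiset.prod_singleton,
    mul_assoc]
  refine Prod.ext rfl (Prod.ext (funext fun i => ?_) rfl)
  simpa only [Pi.smul_apply, smul_eq_mul, mul_assoc] using eval_integral hint i

theorem isLittleO_localMoments_sub (hf : ContDiff ℝ 2 f)
    (hC : ∀ y, ‖iteratedFDeriv ℝ 2 f y‖ ≤ C)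
    (hK : Integrable K) (hK4 : Integrable fun z => K z * ‖z‖ ^ 4)
    (hKsymm : ∀ i z, K (Function.update z i (-z i)) = K z)
    (hK0 : moment K 0 = 1) (hK2 : ∀ i j, moment K {i, j} = if i = j then 1 else 0)
    (hμ4 : ∀ i, μ4 = ∫ z, K z * z i ^ 4)
    (hμ22 : ∀ i j, i ≠ j → μ22 = ∫ z, K z * z i ^ 2 * z j ^ 2) (x₀ : Vec d) :
    (fun p : ℝ × Vec d => localMoments K f p.1 p.2 - Jop μ4 μ22 (scaledJet f p.1 p.2))
      =o[𝓝 (0, x₀)] fun p => p.1 ^ 2 := by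
  have hcomponent : ∀ s : Multiset (Fin d), s.card ≤ 2 →
      (fun p : ℝ × Vec d => (∫ z, K z * f (p.2 + p.1 • z) * (s.map z).prod) -
        momentExpansion K f s p.1 p.2) =o[𝓝 (0, x₀)] fun p => p.1 ^ 2 := fun s hs =>
    isLittleO_integral_sub_momentExpansion hf hC hK hK4 (by lia) x₀
  simp only [localMoments_eq hf hC hK hK4, Jop_scaledJet hKsymm hK0 hK2 hμ4 hμ22 hf]
  exact (hcomponent 0 (by simp)).prod_left <|
    (isLittleO_pi.2 fun i => hcomponent {i} (by simp)).prod_left <|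
      isLittleO_pi.2 fun j => isLittleO_pi.2 fun k => hcomponent {j, k} (by simp)

theorem norm_le_euclNorm (z : Vec d) : ‖z‖ ≤ euclNorm z := by
  refine (pi_norm_le_iff_of_nonneg (Real.sqrt_nonneg _)).2 fun i => ?_
  exact Real.abs_le_sqrt (Finset.single_le_sum (fun j _ => sq_nonneg (z j)) (Finset.mem_univ i))

theorem Hnorm_le_mul_norm (v : Htriple d) : Hnorm v ≤ (1 + d) * ‖v‖ := by
  have hfst : v.1 ^ 2 ≤ ‖v‖ ^ 2 := sq_le_sq.2 (by simpa using norm_fst_le v)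
  have hsnd : ∀ i, v.2.1 i ^ 2 ≤ ‖v‖ ^ 2 := fun i => sq_le_sq.2 <| by
    simpa using (norm_le_pi_norm v.2.1 i).trans ((norm_fst_le v.2).trans (norm_snd_le v))
  have hthd : ∀ j k, v.2.2 j k ^ 2 ≤ ‖v‖ ^ 2 := fun j k => sq_le_sq.2 <| by
    simpa using (norm_le_pi_norm (v.2.2 j) k).trans
      ((norm_le_pi_norm v.2.2 j).trans ((norm_snd_le v.2).trans (norm_snd_le v)))
  refine Real.sqrt_le_iff.2 ⟨by positivity, ?_⟩
  have hsum : v.1 ^ 2 + ∑ i, v.2.1 i ^ 2 + (∑ j, ∑ k, v.2.2 j k ^ 2) / 2 ≤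
      ‖v‖ ^ 2 + ∑ _i : Fin d, ‖v‖ ^ 2 + (∑ _j : Fin d, ∑ _k : Fin d, ‖v‖ ^ 2) / 2 :=
    add_le_add (add_le_add hfst (Finset.sum_le_sum fun i _ => hsnd i)) <|
      div_le_div_of_nonneg_right
        (Finset.sum_le_sum fun j _ => Finset.sum_le_sum fun k _ => hthd j k) zero_le_two
  simp only [Finset.sum_const, Finset.card_univ, Fintype.card_fin, nsmul_eq_mul] at hsum
  nlinarith [sq_nonneg ((d : ℝ) * ‖v‖), mul_nonneg d.cast_nonneg (sq_nonneg ‖v‖)]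

theorem exists_forall_Hnorm_le_of_isLittleO {F : ℝ → Vec d → Htriple d}
    (hF : ∀ x₀, (fun p : ℝ × Vec d => F p.1 p.2) =o[𝓝 (0, x₀)] fun p => p.1 ^ 2)
    (B : ℝ) {ε : ℝ} (hε : 0 < ε) :
    ∃ δ > (0 : ℝ), ∀ h : ℝ, 0 < h → h < δ → ∀ x : Vec d, euclNorm x ≤ B →
      Hnorm (F h x) ≤ ε * h ^ 2 := by
  have hd : (0 : ℝ) < 1 + d := by positivity
  have hlocal : ∀ x₀ ∈ Metric.closedBall (0 : Vec d) B,
      ∀ᶠ p : ℝ × Vec d in 𝓝 (0, x₀), Hnorm (F p.1 p.2) ≤ ε * p.1 ^ 2 := by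
    intro x₀ _
    filter_upwards [(hF x₀).bound (div_pos hε hd)] with p hp
    calc Hnorm (F p.1 p.2) ≤ (1 + d) * ‖F p.1 p.2‖ := Hnorm_le_mul_norm _
      _ ≤ (1 + d) * (ε / (1 + d) * ‖p.1 ^ 2‖) := by gcongr
      _ = ε * p.1 ^ 2 := by
        rw [Real.norm_of_nonneg (sq_nonneg _), ← mul_assoc, mul_div_cancel₀ _ hd.ne']
  have huniform : ∀ᶠ h in 𝓝 (0 : ℝ), ∀ x ∈ Metric.closedBall (0 : Vec d) B,
      Hnorm (F h x) ≤ ε * h ^ 2 :=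
    (isCompact_closedBall 0 B).eventually_forall_of_forall_eventually hlocal
  obtain ⟨δ, hδ, hball⟩ := Metric.eventually_nhds_iff.1 huniform
  refine ⟨δ, hδ, fun h hpos hlt x hx => hball ?_ x ?_⟩
  · rwa [Real.dist_0_eq_abs, abs_of_pos hpos]
  · exact mem_closedBall_zero_iff.2 ((norm_le_euclNorm x).trans hx)

theorem integrable_mul_norm_pow_of_euclNorm_rpow {K : Vec d → ℝ} {n : ℕ}
    (hK : AEStronglyMeasurable K) (hKn : Integrable fun z => K z * euclNorm z ^ (n : ℝ)) :
    Integrable fun z => K z * ‖z‖ ^ n := by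
  refine hKn.mono (hK.mul (by fun_prop)) (Eventually.of_forall fun z => ?_)
  simp only [Real.rpow_natCast, norm_mul, norm_pow, norm_norm]
  gcongr
  exact (norm_le_euclNorm z).trans (le_abs_self _)

end LocalMoments

theorem apply_update_neg_of_signed_perm_invariant {ι α : Type*} [DecidableEq ι]
    {K : (ι → ℝ) → α} (hK : ∀ ξ : ι → ℝ, (∀ i, ξ i = 1 ∨ ξ i = -1) → ∀ (σ : Equiv.Perm ι) z,
      K z = K fun i => ξ i * z (σ i)) (i : ι) (z : ι → ℝ) :
    K (Function.update z i (-z i)) = K z := by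
  have hsign : ∀ j, Function.update (1 : ι → ℝ) i (-1) j = 1 ∨
      Function.update (1 : ι → ℝ) i (-1) j = -1 := fun j => by
    by_cases hj : j = i <;> simp [hj]
  rw [hK _ hsign 1 z]
  congr 1 with j
  by_cases hj : j = i
  · subst hj
    simp
  · simp [hj]

theorem statement1_general {d : ℕ} {f K : Vec d → ℝ} (hf : ContDiff ℝ 2 f)
    (hfb : ∃ C : ℝ, ∀ x, ‖iteratedFDeriv ℝ 2 f x‖ ≤ C)
    (hKmom : Integrable fun z => K z * ‖z‖ ^ 4)
    (hK0 : (∫ z, K z) = 1)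
    (hKsymm : ∀ i z, K (Function.update z i (-z i)) = K z)
    (hK2 : ∀ i j, (∫ z, K z * z i * z j) = if i = j then 1 else 0)
    {μ4 μ22 : ℝ} (hμ4 : ∀ i, μ4 = ∫ z, K z * z i ^ 4)
    (hμ22 : ∀ i j, i ≠ j → μ22 = ∫ z, K z * z i ^ 2 * z j ^ 2)
    (B : ℝ) {ε : ℝ} (hε : 0 < ε) :
    ∃ δ > (0 : ℝ), ∀ h : ℝ, 0 < h → h < δ → ∀ x : Vec d, euclNorm x ≤ B →
      Hnorm (localMoments K f h x - Jop μ4 μ22 (scaledJet f h x)) ≤ ε * h ^ 2 := by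
  obtain ⟨C, hC⟩ := hfb
  have hK : Integrable K := .of_integral_ne_zero (hK0 ▸ one_ne_zero)
  have hmoment₀ : moment K 0 = 1 := by simpa [moment] using hK0
  have hmoment₂ : ∀ i j, moment K {i, j} = if i = j then 1 else 0 := by
    simpa [moment, mul_assoc] using hK2
  exact exists_forall_Hnorm_le_of_isLittleO
    (isLittleO_localMoments_sub hf hC hK hKmom hKsymm hmoment₀ hmoment₂ hμ4 hμ22) B hε

/-- `(s_h(x), 𝔰_h(x), S_h(x)) = J(f(x), h Df(x), h² D²f(x)) + o(h²)`
locally uniformly in `x`, for a `C_b²` density `f` and a kernel with (K0)-(K2). -/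
theorem statement1 {d : ℕ} (hd : 1 ≤ d)
    (f : Vec d → ℝ) (hf : ContDiff ℝ (2 : ℕ∞) f)
    (hfb : ∀ n : ℕ, n ≤ 2 → ∃ C : ℝ, ∀ x : Vec d, ‖iteratedFDeriv ℝ n f x‖ ≤ C)
    (K : Vec d → ℝ) (hKmeas : Measurable K) (hKpos : ∀ z, 0 ≤ K z)
    (hKbd : ∃ C : ℝ, ∀ z, K z ≤ C)
    (hKmom : ∀ r : ℝ, 0 < r → Integrable (fun z => K z * euclNorm z ^ r))
    (hK0 : (∫ z : Vec d, K z) = 1)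
    (hK1 : ∀ (ξ : Vec d), (∀ i, ξ i = 1 ∨ ξ i = -1) → ∀ (σ : Equiv.Perm (Fin d)),
      ∀ z : Vec d, K z = K fun i => ξ i * z (σ i))
    (hK2 : ∀ i j : Fin d, (∫ z : Vec d, K z * z i * z j) = if i = j then 1 else 0)
    (μ4 μ22 : ℝ)
    (hμ4 : ∀ i : Fin d, μ4 = ∫ z : Vec d, K z * z i ^ 4)
    (hμ22 : ∀ i j : Fin d, i ≠ j → μ22 = ∫ z : Vec d, K z * z i ^ 2 * z j ^ 2)
    (hμ22' : d = 1 → μ22 = 1) :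
    ∀ B > (0 : ℝ), ∀ ε > (0 : ℝ), ∃ δ > (0 : ℝ), ∀ h : ℝ, 0 < h → h < δ →
      ∀ x : Vec d, euclNorm x ≤ B →
        Hnorm
          (((∫ z : Vec d, K z * f (x + h • z),
              ∫ z : Vec d, (K z * f (x + h • z)) • z,
              fun j k => ∫ z : Vec d, K z * f (x + h • z) * z j * z k) : Htriple d) -
            Jop μ4 μ22
              (f x, fun i => h * fderiv ℝ f x (Pi.single i 1),
                fun j k => h ^ 2 * iteratedFDeriv ℝ 2 f x ![Pi.single j 1, Pi.single k 1]))
          ≤ ε * h ^ 2 :=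
  fun B _ _ hε => statement1_general hf (hfb 2 le_rfl)
    (integrable_mul_norm_pow_of_euclNorm_rpow hKmeas.aestronglyMeasurable (hKmom (4 : ℕ) four_pos))
    hK0 (apply_update_neg_of_signed_perm_invariant hK1) hK2 hμ4 hμ22 B hε
end
end
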